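/- arXiv:2106.03726 — 3 statements merged into one kernel-verified Lean document; each statement's English description precedes it below -/
import Mathlib

section
/- Let d = d_1 + d_2 with d_1 ≥ 2 and d_2 ≥ 1, and let q_1, …, q_d be pairwise coprime positive integers. Assume V, Y : ℤ^d → ℝ are Γ-periodic, both are (d_1,d_2) separable with V = V_1 ⊕ V_2 and Y = Y_1 ⊕ Y_2 (where V_1, Y_1 are functions on ℤ^{d_1} and V_2, Y_2 on ℤ^{d_2}), and V and Y are Fermi isospectral. Then for j = 1, 2 there exists a constant C_j ∈ ℝ such that V_j + C_j and Y_j are Floquet isospectral as Γ_j-periodic potentials on ℤ^{d_j}. -/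
open scoped BigOperators
open Complex

noncomputable section

/-- The fundamental domain `W` for `Γ = q₁ℤ ⊕ ⋯ ⊕ q_dℤ`, as a type. -/
abbrev Cell (d : ℕ) (q : Fin d → ℕ) := (j : Fin d) → Fin (q j)

/-- `V : ℤ^d → ℝ` is `Γ`-periodic for `Γ = q₁ℤ ⊕ ⋯ ⊕ q_dℤ`. -/
def IsPeriodicPotential (d : ℕ) (q : Fin d → ℕ) (V : (Fin d → ℤ) → ℝ) : Prop :=
  ∀ n γ : Fin d → ℤ, (∀ j, (q j : ℤ) ∣ γ j) → V (n + γ) = V n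

/-- The discrete Fourier transform `V̂(l)`, defined for all `l ∈ ℤ^d`
(it is automatically `Γ`-periodic in `l`). -/
def dft (d : ℕ) (q : Fin d → ℕ) (V : (Fin d → ℤ) → ℝ) (l : Fin d → ℤ) : ℂ :=
  (1 / ∏ j, (q j : ℂ)) *
    ∑ n : Cell d q, (V (fun j => ((n j : ℕ) : ℤ)) : ℂ) *
      Complex.exp (-(2 * Real.pi * Complex.I) * ∑ j, (l j : ℂ) * ((n j : ℕ) : ℂ) / (q j : ℂ))

/-- `ρ^j_m = e^{2πi m/q_j}`. -/
def rho (d : ℕ) (q : Fin d → ℕ) (j : Fin d) (m : ℤ) : ℂ :=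
  Complex.exp (2 * Real.pi * Complex.I * (m : ℂ) / (q j : ℂ))

/-- The Floquet matrix `M_V(z)` (the matrix `A + B_V` of Lemma 2.7). -/
def floquetMatrix (d : ℕ) (q : Fin d → ℕ) (V : (Fin d → ℤ) → ℝ) (z : Fin d → ℂ) :
    Matrix (Cell d q) (Cell d q) ℂ := fun n n' =>
  (if n = n' then ∑ j, (rho d q j (n j : ℕ) * z j + (rho d q j (n j : ℕ) * z j)⁻¹) else 0)
    + dft d q V (fun j => ((n j : ℕ) : ℤ) - ((n' j : ℕ) : ℤ))

/-- `P̃_V(z, λ) = det (M_V(z) − λ I)`. -/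
def floquetDet (d : ℕ) (q : Fin d → ℕ) (V : (Fin d → ℤ) → ℝ) (z : Fin d → ℂ) (lam : ℂ) : ℂ :=
  Matrix.det (floquetMatrix d q V z - lam • (1 : Matrix (Cell d q) (Cell d q) ℂ))

/-- `V` and `Y` are Fermi isospectral. -/
def FermiIsospectral (d : ℕ) (q : Fin d → ℕ) (V Y : (Fin d → ℤ) → ℝ) : Prop :=
  ∃ lam0 : ℂ,
    {z : Fin d → ℂ | (∀ j, z j ≠ 0) ∧ floquetDet d q V z lam0 = 0}
      = {z : Fin d → ℂ | (∀ j, z j ≠ 0) ∧ floquetDet d q Y z lam0 = 0}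

/-- `V` and `Y` are Floquet isospectral. -/
def FloquetIsospectral (d : ℕ) (q : Fin d → ℕ) (V Y : (Fin d → ℤ) → ℝ) : Prop :=
  ∀ z : Fin d → ℂ, (∀ j, z j ≠ 0) → ∀ lam : ℂ,
    floquetDet d q V z lam = floquetDet d q Y z lam

/-- The average `[V]` of `V` over one periodicity cell. -/
def potentialAvg (d : ℕ) (q : Fin d → ℕ) (V : (Fin d → ℤ) → ℝ) : ℝ :=
  (1 / ∏ j, (q j : ℝ)) * ∑ n : Cell d q, V (fun j => ((n j : ℕ) : ℤ))

/-- The embedding of the `j`-th block of coordinates into `Fin d`,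
given block sizes `D : Fin r → ℕ` with `∑ j, D j = d`. -/
def blockEmbed {r d : ℕ} (D : Fin r → ℕ) (hsum : ∑ j, D j = d) (j : Fin r) (i : Fin (D j)) :
    Fin d :=
  ⟨(∑ k ∈ Finset.univ.filter (fun k => k < j), D k) + i.1, by
    have hj : j ∉ Finset.univ.filter (fun k => k < j) := by simp
    have h2 : (∑ k ∈ Finset.univ.filter (fun k => k < j), D k) + D j ≤ ∑ k, D k := by
      calc (∑ k ∈ Finset.univ.filter (fun k => k < j), D k) + D j
          = ∑ k ∈ insert j (Finset.univ.filter (fun k => k < j)), D k := by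
            rw [Finset.sum_insert hj, add_comm]
        _ ≤ ∑ k, D k := Finset.sum_le_sum_of_subset (Finset.subset_univ _)
    have h3 := i.2
    omega⟩

/-- `V` is `(D 0, …, D (r-1))` separable. -/
def IsSeparablePotential {r : ℕ} (d : ℕ) (D : Fin r → ℕ) (hsum : ∑ j, D j = d)
    (V : (Fin d → ℤ) → ℝ) : Prop :=
  ∃ Vj : (j : Fin r) → (Fin (D j) → ℤ) → ℝ,
    ∀ n : Fin d → ℤ, V n = ∑ j, Vj j (fun i => n (blockEmbed D hsum j i))



/-- The zero cell. -/
def cellZero (d : ℕ) (q : Fin d → ℕ) (hq : ∀ j, 0 < q j) : Cell d q := fun j => ⟨0, hq j⟩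

/-- Leading symbol. -/
def ev (d : ℕ) (q : Fin d → ℕ) (n : Cell d q) (u : Fin d → ℂ) : ℂ :=
  ∑ j, rho d q j (n j : ℕ) * u j

lemma rho_eq_pow (d : ℕ) (q : Fin d → ℕ) (j : Fin d) (m : ℕ) :
    rho d q j (m : ℤ) = (Complex.exp (2 * Real.pi * Complex.I / (q j : ℂ))) ^ m := by
  rw [rho, ← Complex.exp_nat_mul]
  congr 1
  push_cast
  ring

lemma rho_prim (d : ℕ) (q : Fin d → ℕ) (hq : ∀ j, 0 < q j) (j : Fin d) :
    IsPrimitiveRoot (Complex.exp (2 * Real.pi * Complex.I / (q j : ℂ))) (q j) :=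
  Complex.isPrimitiveRoot_exp _ (hq j).ne'

lemma rho_ne_zero (d : ℕ) (q : Fin d → ℕ) (j : Fin d) (m : ℤ) : rho d q j m ≠ 0 :=
  Complex.exp_ne_zero _

lemma rho_inj (d : ℕ) (q : Fin d → ℕ) (hq : ∀ j, 0 < q j) (j : Fin d) (m m' : Fin (q j))
    (h : rho d q j ((m : ℕ) : ℤ) = rho d q j ((m' : ℕ) : ℤ)) : m = m' := by
  rw [rho_eq_pow, rho_eq_pow] at h
  exact Fin.ext ((rho_prim d q hq j).pow_inj m.2 m'.2 h)

lemma rho_pow (d : ℕ) (q : Fin d → ℕ) (hq : ∀ j, 0 < q j) (j : Fin d) (m : ℕ) :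
    rho d q j (m : ℤ) ^ (q j) = 1 := by
  rw [rho_eq_pow, pow_right_comm, (rho_prim d q hq j).pow_eq_one, one_pow]

lemma rho_zero (d : ℕ) (q : Fin d → ℕ) (j : Fin d) : rho d q j ((0 : ℕ) : ℤ) = 1 := by
  rw [rho_eq_pow, pow_zero]

lemma eq_one_of_coprime_pow {x : ℂ} {a b : ℕ} (hab : Nat.Coprime a b) (ha : x ^ a = 1)
    (hb : x ^ b = 1) : x = 1 := by
  have h := orderOf_dvd_of_pow_eq_one ha
  have h' := orderOf_dvd_of_pow_eq_one hb
  have := Nat.dvd_gcd h h'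
  rw [hab] at this
  exact orderOf_eq_one_iff.mp (Nat.dvd_one.mp this)

/-- dft of the constant one -/
lemma expsum (d : ℕ) (q : Fin d → ℕ) (hq : ∀ j, 0 < q j) (n n' : Cell d q) :
    (1 / ∏ j, (q j : ℂ)) * ∑ m : Cell d q,
      Complex.exp (-(2 * Real.pi * Complex.I) *
        ∑ j, ((((n j : ℕ) : ℤ) - ((n' j : ℕ) : ℤ) : ℤ) : ℂ) * ((m j : ℕ) : ℂ) / (q j : ℂ))
      = if n = n' then 1 else 0 := by
  have hprod : ∀ m : Cell d q, Complex.exp (-(2 * Real.pi * Complex.I) *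
        ∑ j, ((((n j : ℕ) : ℤ) - ((n' j : ℕ) : ℤ) : ℤ) : ℂ) * ((m j : ℕ) : ℂ) / (q j : ℂ))
      = ∏ j, (rho d q j ((n' j : ℕ) : ℤ) / rho d q j ((n j : ℕ) : ℤ)) ^ (m j : ℕ) := by
    intro m
    rw [Finset.mul_sum, Complex.exp_sum]
    refine Finset.prod_congr rfl fun j _ => ?_
    rw [rho, rho, ← Complex.exp_sub, ← Complex.exp_nat_mul]
    congr 1
    push_cast
    ring
  simp_rw [hprod]
  rw [← Fintype.piFinset_univ, ← Finset.prod_univ_sum (fun j => (Finset.univ : Finset (Fin (q j))))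
    (fun j (m : Fin (q j)) => (rho d q j ((n' j : ℕ) : ℤ) / rho d q j ((n j : ℕ) : ℤ)) ^ (m : ℕ))]
  split_ifs with h
  · subst h
    have : ∀ j, (q j : ℂ) ≠ 0 := fun j => by exact_mod_cast (hq j).ne'
    simp [div_self (rho_ne_zero _ _ _ _), Finset.prod_ne_zero_iff, this]
  · obtain ⟨j, hj⟩ := Function.ne_iff.mp h
    refine mul_eq_zero_of_right _ (Finset.prod_eq_zero (Finset.mem_univ j) ?_)
    have hne : rho d q j ((n' j : ℕ) : ℤ) / rho d q j ((n j : ℕ) : ℤ) ≠ 1 := by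
      intro h1
      rw [div_eq_one_iff_eq (rho_ne_zero _ _ _ _)] at h1
      exact hj (rho_inj d q hq j _ _ h1.symm)
    rw [Fin.sum_univ_eq_sum_range (fun m =>
      (rho d q j ((n' j : ℕ) : ℤ) / rho d q j ((n j : ℕ) : ℤ)) ^ m), geom_sum_eq hne,
      div_pow, rho_pow d q hq, rho_pow d q hq]
    simp

lemma dft_add_const (d : ℕ) (q : Fin d → ℕ) (hq : ∀ j, 0 < q j) (V : (Fin d → ℤ) → ℝ) (C : ℝ)
    (n n' : Cell d q) :
    dft d q (fun m => V m + C) (fun j => ((n j : ℕ) : ℤ) - ((n' j : ℕ) : ℤ))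
      = dft d q V (fun j => ((n j : ℕ) : ℤ) - ((n' j : ℕ) : ℤ)) + if n = n' then (C : ℂ) else 0 := by
  have h := expsum d q hq n n'
  have h2 : (if n = n' then (C : ℂ) else 0) = C * (if n = n' then 1 else 0) := by
    split_ifs <;> simp
  rw [h2, ← h, dft, dft]
  simp only [Complex.ofReal_add, add_mul, Finset.sum_add_distrib, mul_add, ← Finset.mul_sum]
  ring

lemma floquetDet_add_const (d : ℕ) (q : Fin d → ℕ) (hq : ∀ j, 0 < q j) (V : (Fin d → ℤ) → ℝ)
    (C : ℝ) (z : Fin d → ℂ) (lam : ℂ) :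
    floquetDet d q (fun m => V m + C) z lam = floquetDet d q V z (lam - C) := by
  unfold floquetDet
  congr 1
  ext n n'
  simp only [Matrix.sub_apply, Matrix.smul_apply, Matrix.one_apply, floquetMatrix,
    dft_add_const d q hq, smul_eq_mul]
  split_ifs <;> ring

lemma dft_zero (d : ℕ) (q : Fin d → ℕ) (V : (Fin d → ℤ) → ℝ) (n : Cell d q) :
    dft d q V (fun j => ((n j : ℕ) : ℤ) - ((n j : ℕ) : ℤ)) = (potentialAvg d q V : ℂ) := by
  simp [dft, potentialAvg]

/-- splitting of cells -/
def cellSplit (d1 d2 : ℕ) (q : Fin (d1 + d2) → ℕ) :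
    Cell (d1 + d2) q ≃ Cell d1 (fun i => q (Fin.castAdd d2 i)) ×
      Cell d2 (fun i => q (Fin.natAdd d1 i)) where
  toFun n := (fun i => n (Fin.castAdd d2 i), fun i => n (Fin.natAdd d1 i))
  invFun p := Fin.addCases (motive := fun i => Fin (q i)) p.1 p.2
  left_inv n := by
    funext i
    refine Fin.addCases (fun i => ?_) (fun i => ?_) i <;> simp
  right_inv p := by
    ext i <;> simp

lemma floquetMatrix_split (d1 d2 : ℕ) (q : Fin (d1 + d2) → ℕ) (hq : ∀ j, 0 < q j)
    (V : (Fin (d1 + d2) → ℤ) → ℝ) (V1 : (Fin d1 → ℤ) → ℝ) (V2 : (Fin d2 → ℤ) → ℝ)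
    (hVsep : ∀ n : Fin (d1 + d2) → ℤ,
      V n = V1 (fun i => n (Fin.castAdd d2 i)) + V2 (fun i => n (Fin.natAdd d1 i)))
    (z : Fin (d1 + d2) → ℂ) (n n' : Cell (d1 + d2) q) :
    floquetMatrix (d1 + d2) q V z n n' =
      floquetMatrix d1 (fun i => q (Fin.castAdd d2 i)) V1 (fun i => z (Fin.castAdd d2 i))
        (cellSplit d1 d2 q n).1 (cellSplit d1 d2 q n').1 *
        (if (cellSplit d1 d2 q n).2 = (cellSplit d1 d2 q n').2 then 1 else 0) +
      (if (cellSplit d1 d2 q n).1 = (cellSplit d1 d2 q n').1 then 1 else 0) *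
      floquetMatrix d2 (fun i => q (Fin.natAdd d1 i)) V2 (fun i => z (Fin.natAdd d1 i))
        (cellSplit d1 d2 q n).2 (cellSplit d1 d2 q n').2 := by
  have hdft : dft (d1 + d2) q V (fun j => ((n j : ℕ) : ℤ) - ((n' j : ℕ) : ℤ)) =
      dft d1 (fun i => q (Fin.castAdd d2 i)) V1 (fun j =>
        (((cellSplit d1 d2 q n).1 j : ℕ) : ℤ) - (((cellSplit d1 d2 q n').1 j : ℕ) : ℤ)) *
        (if (cellSplit d1 d2 q n).2 = (cellSplit d1 d2 q n').2 then 1 else 0) +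
      (if (cellSplit d1 d2 q n).1 = (cellSplit d1 d2 q n').1 then 1 else 0) *
      dft d2 (fun i => q (Fin.natAdd d1 i)) V2 (fun j =>
        (((cellSplit d1 d2 q n).2 j : ℕ) : ℤ) - (((cellSplit d1 d2 q n').2 j : ℕ) : ℤ)) := by
    rw [← expsum d1 _ (fun i => hq _), ← expsum d2 _ (fun i => hq _)]
    unfold dft
    rw [← (cellSplit d1 d2 q).symm.sum_comp, Fintype.sum_prod_type]
    have key : ∀ (x : Cell d1 (fun i => q (Fin.castAdd d2 i)))
        (y : Cell d2 (fun i => q (Fin.natAdd d1 i))),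
        ((V (fun j => (((cellSplit d1 d2 q).symm (x, y) j : ℕ) : ℤ)) : ℝ) : ℂ)
          = V1 (fun j => ((x j : ℕ) : ℤ)) + V2 (fun j => ((y j : ℕ) : ℤ)) := by
      intro x y
      rw [hVsep]
      simp [cellSplit]
    simp_rw [key, Fin.sum_univ_add, mul_add, Complex.exp_add, Fin.prod_univ_add]
    have hs1 : ∀ x y i, ((cellSplit d1 d2 q).symm (x, y)) (Fin.castAdd d2 i) = x i := by
      intro x y i; simp [cellSplit]
    have hs2 : ∀ x y i, ((cellSplit d1 d2 q).symm (x, y)) (Fin.natAdd d1 i) = y i := by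
      intro x y i; simp [cellSplit]
    simp_rw [hs1, hs2]
    have hc1 : ∀ n : Cell (d1 + d2) q, ∀ i, (cellSplit d1 d2 q n).1 i = n (Fin.castAdd d2 i) :=
      fun _ _ => rfl
    have hc2 : ∀ n : Cell (d1 + d2) q, ∀ i, (cellSplit d1 d2 q n).2 i = n (Fin.natAdd d1 i) :=
      fun _ _ => rfl
    simp_rw [hc1, hc2]
    generalize (∏ i, (q (Fin.castAdd d2 i) : ℂ)) = a
    generalize (∏ i, (q (Fin.natAdd d1 i) : ℂ)) = b
    generalize hE1 : (fun x : Cell d1 (fun i => q (Fin.castAdd d2 i)) =>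
      Complex.exp (-(2 * Real.pi * Complex.I) * ∑ i, ((((n (Fin.castAdd d2 i) : ℕ) : ℤ) -
        ((n' (Fin.castAdd d2 i) : ℕ) : ℤ) : ℤ) : ℂ) * ((x i : ℕ) : ℂ) /
        (q (Fin.castAdd d2 i) : ℂ))) = E1
    generalize hE2 : (fun x : Cell d2 (fun i => q (Fin.natAdd d1 i)) =>
      Complex.exp (-(2 * Real.pi * Complex.I) * ∑ i, ((((n (Fin.natAdd d1 i) : ℕ) : ℤ) -
        ((n' (Fin.natAdd d1 i) : ℕ) : ℤ) : ℤ) : ℂ) * ((x i : ℕ) : ℂ) /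
        (q (Fin.natAdd d1 i) : ℂ))) = E2
    have hE1' := fun x => congrFun hE1 x
    have hE2' := fun x => congrFun hE2 x
    simp only at hE1' hE2'
    simp_rw [hE1', hE2']
    have : ∀ (f : Cell d1 (fun i => q (Fin.castAdd d2 i)) → ℂ)
       (g : Cell d2 (fun i => q (Fin.natAdd d1 i)) → ℂ),
       ∑ x, ∑ y, (f x + g y) * (E1 x * E2 y) = (∑ x, f x * E1 x) * (∑ y, E2 y) +
         (∑ x, E1 x) * ∑ y, g y * E2 y := by
      intro f g
      simp_rw [Finset.sum_mul_sum, ← Finset.sum_add_distrib]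
      refine Finset.sum_congr rfl fun x _ => Finset.sum_congr rfl fun y _ => by ring
    rw [this, one_div_mul_eq_div, one_div_mul_eq_div, one_div_mul_eq_div, one_div_mul_eq_div,
      one_div_mul_eq_div, div_mul_div_comm, div_mul_div_comm, add_div]
  unfold floquetMatrix
  rw [hdft]
  have heq : n = n' ↔ (cellSplit d1 d2 q n).1 = (cellSplit d1 d2 q n').1 ∧
      (cellSplit d1 d2 q n).2 = (cellSplit d1 d2 q n').2 := by
    rw [← Prod.ext_iff, (cellSplit d1 d2 q).injective.eq_iff]
  by_cases h1 : (cellSplit d1 d2 q n).1 = (cellSplit d1 d2 q n').1 <;>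
  by_cases h2 : (cellSplit d1 d2 q n).2 = (cellSplit d1 d2 q n').2
  · rw [if_pos (heq.2 ⟨h1, h2⟩), Fin.sum_univ_add]
    simp only [h1, h2, if_true]
    have : n = n' := heq.2 ⟨h1, h2⟩
    subst this
    simp only [rho, cellSplit, Equiv.coe_fn_mk]
    ring
  · rw [if_neg (fun h => h2 (heq.1 h).2)]
    simp [h1, h2]
  · rw [if_neg (fun h => h1 (heq.1 h).1)]
    simp [h1, h2]
  · rw [if_neg (fun h => h1 (heq.1 h).1)]
    simp [h1, h2]

lemma kron_sum_det {m n : Type*} [Fintype m] [Fintype n] [DecidableEq m] [DecidableEq n]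
    (A : Matrix m m ℂ) (B : Matrix n n ℂ) (lam : ℂ) :
    Matrix.det ((Matrix.of fun (p p' : m × n) => A p.1 p'.1 * (if p.2 = p'.2 then 1 else 0) +
      (if p.1 = p'.1 then 1 else 0) * B p.2 p'.2) - lam • (1 : Matrix (m × n) (m × n) ℂ)) = 0 ↔
    ∃ a b : ℂ, a + b = lam ∧ (A - a • (1 : Matrix m m ℂ)).det = 0 ∧
      (B - b • (1 : Matrix n n ℂ)).det = 0 := by
  have hmul : ∀ X : m × n → ℂ, ((Matrix.of fun (p p' : m × n) => A p.1 p'.1 *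
      (if p.2 = p'.2 then 1 else 0) +
      (if p.1 = p'.1 then 1 else 0) * B p.2 p'.2) - lam • (1 : Matrix (m × n) (m × n) ℂ)).mulVec X
      = fun p => (A * Matrix.of (fun i j => X (i, j)) + Matrix.of (fun i j => X (i, j)) * B.transpose
          - lam • Matrix.of (fun i j => X (i, j))) p.1 p.2 := by
    intro X
    funext p
    simp only [Matrix.sub_mulVec, Pi.sub_apply, Matrix.smul_mulVec, Matrix.one_mulVec,
      Pi.smul_apply, Matrix.sub_apply, Matrix.add_apply, Matrix.smul_apply, Matrix.of_apply]
    congr 1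
    simp only [Matrix.mulVec, dotProduct, Matrix.mul_apply, Matrix.of_apply, Fintype.sum_prod_type,
      Matrix.transpose_apply, add_mul, Finset.sum_add_distrib]
    congr 1
    · refine Finset.sum_congr rfl fun i _ => ?_
      simp
    · simp [mul_comm]
  constructor
  · intro h
    obtain ⟨X, hX0, hX⟩ := Matrix.exists_mulVec_eq_zero_iff.mpr h
    rw [hmul] at hX
    set Y : Matrix m n ℂ := Matrix.of (fun i j => X (i, j)) with hY
    have hYne : Y ≠ 0 := by
      intro h0
      apply hX0
      funext p
      have := congrFun (congrFun h0 p.1) p.2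
      simpa [hY] using this
    set N : Matrix n n ℂ := lam • (1 : Matrix n n ℂ) - B.transpose with hN
    have hAY : A * Y = Y * N := by
      ext i j
      have := congrFun hX (i, j)
      simp only [Matrix.sub_apply, Matrix.add_apply, Pi.zero_apply] at this
      rw [hN, Matrix.mul_sub, Matrix.sub_apply, Matrix.mul_smul, Matrix.mul_one]
      linear_combination this
    have hpow : ∀ k : ℕ, A ^ k * Y = Y * N ^ k := by
      intro k
      induction k with
      | zero => simp
      | succ k ih => rw [pow_succ, Matrix.mul_assoc, hAY, ← Matrix.mul_assoc, ih, Matrix.mul_assoc,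
          ← pow_succ]
    have hpoly : ∀ f : Polynomial ℂ, Polynomial.aeval A f * Y = Y * Polynomial.aeval N f := by
      intro f
      rw [Polynomial.aeval_eq_sum_range, Polynomial.aeval_eq_sum_range, Matrix.sum_mul,
        Matrix.mul_sum]
      refine Finset.sum_congr rfl fun k _ => ?_
      rw [Matrix.smul_mul, Matrix.mul_smul, hpow]
    have h0 := hpoly A.charpoly
    rw [Matrix.aeval_self_charpoly, Matrix.zero_mul] at h0
    have hnu : ¬ IsUnit (Polynomial.aeval N A.charpoly) := by
      intro hu
      rw [Matrix.isUnit_iff_isUnit_det] at hu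
      apply hYne
      have := congrArg (· * (Polynomial.aeval N A.charpoly)⁻¹) h0
      simpa [Matrix.mul_assoc, Matrix.mul_nonsing_inv _ hu] using this.symm
    have hne : Nonempty n := by
      by_contra hne
      rw [not_nonempty_iff] at hne
      exact hYne (by ext i j; exact (hne.false j).elim)
    have hspec : (0 : ℂ) ∈ spectrum ℂ (Polynomial.aeval N A.charpoly) :=
      (spectrum.zero_mem_iff ℂ).mpr hnu
    rw [spectrum.map_polynomial_aeval_of_nonempty N A.charpoly
      (spectrum.nonempty_of_isAlgClosed_of_finiteDimensional ℂ N)] at hspec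
    obtain ⟨a, haN, ha⟩ := hspec
    refine ⟨a, lam - a, by ring, ?_, ?_⟩
    · simp only at ha
      rw [Matrix.eval_charpoly] at ha
      rw [← neg_sub, Matrix.det_neg, Matrix.smul_one_eq_diagonal]
      rw [Matrix.scalar_apply] at ha
      rw [ha, mul_zero]
    · rw [spectrum.mem_iff, Matrix.isUnit_iff_isUnit_det, isUnit_iff_ne_zero, not_not] at haN
      rw [← Matrix.det_transpose, ← haN]
      congr 1
      rw [hN, Algebra.algebraMap_eq_smul_one]
      simp only [Matrix.transpose_sub, Matrix.transpose_smul, Matrix.transpose_one, sub_smul]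
      have : (lam - a) • (1 : Matrix n n ℂ) = lam • 1 - a • 1 := sub_smul _ _ _
      abel
  · rintro ⟨a, b, hab, hA, hB⟩
    obtain ⟨x, hx0, hx⟩ := Matrix.exists_mulVec_eq_zero_iff.mpr hA
    obtain ⟨y, hy0, hy⟩ := Matrix.exists_mulVec_eq_zero_iff.mpr hB
    refine Matrix.exists_mulVec_eq_zero_iff.mp ⟨fun p => x p.1 * y p.2, ?_, ?_⟩
    · obtain ⟨i, hi⟩ := Function.ne_iff.mp hx0
      obtain ⟨j, hj⟩ := Function.ne_iff.mp hy0
      exact fun h => mul_ne_zero hi hj (congrFun h (i, j))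
    · rw [hmul]
      funext p
      rw [Matrix.sub_mulVec, Matrix.smul_mulVec, Matrix.one_mulVec, sub_eq_zero] at hx hy
      have h1 := congrFun hx p.1
      have h2 := congrFun hy p.2
      simp only [Matrix.mulVec, dotProduct, Pi.smul_apply, smul_eq_mul] at h1 h2
      simp only [Matrix.sub_apply, Matrix.add_apply, Matrix.smul_apply, Matrix.mul_apply,
        Matrix.of_apply, Matrix.transpose_apply, smul_eq_mul, Pi.zero_apply]
      have e1 : ∑ j, A p.1 j * (x j * y p.2) = a * x p.1 * y p.2 := by
        rw [← h1, Finset.sum_mul]; simp_rw [mul_assoc]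
      have e2 : ∑ j, x p.1 * y j * B p.2 j = x p.1 * (b * y p.2) := by
        rw [← h2, Finset.mul_sum]
        exact Finset.sum_congr rfl fun j _ => by ring
      rw [e1, e2, ← hab]
      ring

lemma floquetDet_split (d1 d2 : ℕ) (q : Fin (d1 + d2) → ℕ) (hq : ∀ j, 0 < q j)
    (V : (Fin (d1 + d2) → ℤ) → ℝ) (V1 : (Fin d1 → ℤ) → ℝ) (V2 : (Fin d2 → ℤ) → ℝ)
    (hVsep : ∀ n : Fin (d1 + d2) → ℤ,
      V n = V1 (fun i => n (Fin.castAdd d2 i)) + V2 (fun i => n (Fin.natAdd d1 i)))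
    (z : Fin (d1 + d2) → ℂ) (lam : ℂ) :
    floquetDet (d1 + d2) q V z lam = 0 ↔ ∃ a b : ℂ, a + b = lam ∧
      floquetDet d1 (fun i => q (Fin.castAdd d2 i)) V1 (fun i => z (Fin.castAdd d2 i)) a = 0 ∧
      floquetDet d2 (fun i => q (Fin.natAdd d1 i)) V2 (fun i => z (Fin.natAdd d1 i)) b = 0 := by
  unfold floquetDet
  rw [← kron_sum_det, ← Matrix.det_submatrix_equiv_self (cellSplit d1 d2 q).symm]
  apply Eq.congr _ rfl
  congr 1
  ext p p'
  simp only [Matrix.submatrix_apply, Matrix.sub_apply, floquetMatrix_split d1 d2 q hq V V1 V2 hVsep,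
    Equiv.apply_symm_apply, Matrix.of_apply, Matrix.smul_apply, Matrix.one_apply,
    EmbeddingLike.apply_eq_iff_eq]

section Helpers
open Filter Topology

lemma poly_bound (p : Polynomial ℂ) (N : ℕ) (hN : p.natDegree ≤ N) (x0 x : ℂ) (ε : ℝ)
    (hx : ‖x - x0‖ ≤ ε) (hno : ∀ r, p.eval r = 0 → ε ≤ ‖x0 - r‖) :
    ‖p.eval x‖ ≤ 2 ^ N * ‖p.eval x0‖ := by
  by_cases hp : p = 0
  · simp [hp]
  have hs : ∀ s : Multiset ℂ, (∀ r ∈ s, ε ≤ ‖x0 - r‖) →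
      ‖(s.map (fun r => x - r)).prod‖ ≤ 2 ^ (Multiset.card s) * ‖(s.map (fun r => x0 - r)).prod‖ := by
    intro s
    induction s using Multiset.induction_on with
    | empty => simp
    | cons a s ih =>
      intro h
      simp only [Multiset.map_cons, Multiset.prod_cons, norm_mul, Multiset.card_cons, pow_succ]
      have h1 := ih (fun r hr => h r (Multiset.mem_cons_of_mem hr))
      have h2 := h a (Multiset.mem_cons_self a s)
      have h3 : ‖x - a‖ ≤ 2 * ‖x0 - a‖ := by
        calc ‖x - a‖ = ‖(x - x0) + (x0 - a)‖ := by ring_nf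
          _ ≤ ‖x - x0‖ + ‖x0 - a‖ := norm_add_le _ _
          _ ≤ _ := by linarith
      calc _ ≤ (2 * ‖x0 - a‖) * (2 ^ (Multiset.card s) * ‖(s.map (fun r => x0 - r)).prod‖) := by
            gcongr
        _ = _ := by ring
  have hev : ∀ y, p.eval y = p.leadingCoeff * (p.roots.map (fun r => y - r)).prod := by
    intro y
    conv_lhs => rw [(IsAlgClosed.splits p).eq_prod_roots]
    simp [Polynomial.eval_multiset_prod, Multiset.map_map]
  have h := hs p.roots (fun r hr => hno r (by simpa using (Polynomial.mem_roots hp).mp hr))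
  rw [hev, hev, norm_mul, norm_mul]
  have hc : (2 : ℝ) ^ (Multiset.card p.roots) ≤ 2 ^ N :=
    pow_le_pow_right₀ (by norm_num) ((Polynomial.card_roots' p).trans hN)
  calc _ ≤ ‖p.leadingCoeff‖ * (2 ^ (Multiset.card p.roots) *
        ‖(p.roots.map (fun r => x0 - r)).prod‖) := by gcongr
    _ ≤ ‖p.leadingCoeff‖ * (2 ^ N * ‖(p.roots.map (fun r => x0 - r)).prod‖) := by gcongr
    _ = _ := by ring

lemma seq_choose (S : ℕ → Set ℂ) (x0 : ℂ)
    (h : ∀ ε > 0, ∀ᶠ k in atTop, ∃ x ∈ S k, dist x x0 < ε) :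
    ∃ x : ℕ → ℂ, Tendsto x atTop (𝓝 x0) ∧ ∀ᶠ k in atTop, x k ∈ S k := by
  classical
  have hne : ∀ᶠ k in atTop, (S k).Nonempty := by
    filter_upwards [h 1 one_pos] with k hk
    obtain ⟨x, hx, _⟩ := hk
    exact ⟨x, hx⟩
  have hch : ∀ k : ℕ, ∃ x, (S k).Nonempty → x ∈ S k ∧ dist x0 x < Metric.infDist x0 (S k) + 1 / (k + 1) := by
    intro k
    by_cases hS : (S k).Nonempty
    · have hlt : Metric.infDist x0 (S k) < Metric.infDist x0 (S k) + 1 / ((k : ℝ) + 1) := by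
        have : 0 < 1 / ((k : ℝ) + 1) := by positivity
        linarith
      obtain ⟨y, hy, hd⟩ := (Metric.infDist_lt_iff hS).mp hlt
      exact ⟨y, fun _ => ⟨hy, hd⟩⟩
    · exact ⟨0, fun h => absurd h hS⟩
  choose x hx using hch
  refine ⟨x, ?_, ?_⟩
  · rw [Metric.tendsto_nhds]
    intro ε hε
    have h1 : ∀ᶠ k : ℕ in atTop, 1 / ((k : ℝ) + 1) < ε / 2 :=
      (tendsto_one_div_add_atTop_nhds_zero_nat).eventually (gt_mem_nhds (by positivity))
    filter_upwards [hne, h1, h (ε / 2) (by positivity)] with k hk1 hk2 hk3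
    obtain ⟨y, hy, hyd⟩ := hk3
    have h2 := (hx k hk1).2
    have h3 := Metric.infDist_le_dist_of_mem (x := x0) hy
    rw [dist_comm] at hyd
    rw [dist_comm]
    linarith
  · filter_upwards [hne] with k hk using (hx k hk).1

lemma root_near (p : ℕ → Polynomial ℂ) (N : ℕ) (hN : ∀ k, (p k).natDegree ≤ N) (P : ℂ → ℂ) (x0 : ℂ)
    (h : ∀ᶠ x in 𝓝 x0, Tendsto (fun k => (p k).eval x) atTop (𝓝 (P x)))
    (h0 : P x0 = 0) (hP : ∃ᶠ x in 𝓝 x0, P x ≠ 0) :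
    ∃ x : ℕ → ℂ, Tendsto x atTop (𝓝 x0) ∧ ∀ᶠ k in atTop, (p k).eval (x k) = 0 := by
  refine seq_choose (fun k => {x | (p k).eval x = 0}) x0 fun ε hε => ?_
  have hball : ∀ᶠ x in 𝓝 x0, ‖x - x0‖ ≤ ε := by
    filter_upwards [Metric.ball_mem_nhds x0 hε] with x hx
    rw [Metric.mem_ball, dist_eq_norm] at hx
    exact hx.le
  obtain ⟨x, hPx, hx, hxb⟩ := (hP.and_eventually (h.and hball)).exists
  have hx0 := h.self_of_nhds
  rw [h0] at hx0
  by_contra hcon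
  rw [not_eventually] at hcon
  apply hPx
  have hlim : Tendsto (fun k => 2 ^ N * ‖(p k).eval x0‖) atTop (𝓝 0) := by
    simpa using (hx0.norm).const_mul ((2 : ℝ) ^ N)
  have hle : ‖P x‖ ≤ 0 := by
    refine le_of_tendsto_of_frequently (f := fun k => ‖(p k).eval x‖ - 2 ^ N * ‖(p k).eval x0‖)
      (x := atTop) ?_ ?_
    · simpa using hx.norm.sub hlim
    · refine hcon.mono fun k hk => ?_
      push Not at hk
      have := poly_bound (p k) N (hN k) x0 x ε hxb (fun r hr => by
        have := hk r hr
        rwa [dist_comm, dist_eq_norm] at this)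
      linarith
  simpa using hle

lemma floquet_poly (d : ℕ) (q : Fin d → ℕ) (V : (Fin d → ℤ) → ℝ) (z u : Fin d → ℂ) (μ : ℂ) :
    ∃ p : Polynomial ℂ, p.natDegree ≤ Fintype.card (Cell d q) * (d + 1) ∧
      ∀ y : ℂ, (∀ j, z j + y * u j ≠ 0) → p.eval y =
        (∏ j, (z j + y * u j)) ^ Fintype.card (Cell d q) *
          floquetDet d q V (fun j => z j + y * u j) μ := by
  classical
  let Z : Fin d → Polynomial ℂ := fun j => Polynomial.C (z j) + Polynomial.X * Polynomial.C (u j)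
  have hZ : ∀ j, (Z j).natDegree ≤ 1 := fun j => by
    refine Polynomial.natDegree_add_le_of_degree_le (by simp) ?_
    exact (Polynomial.natDegree_mul_C_le _ _).trans Polynomial.natDegree_X_le
  have hprod : ∀ s : Finset (Fin d), (∏ j ∈ s, Z j).natDegree ≤ d := fun s => by
    refine (Polynomial.natDegree_prod_le _ _).trans ?_
    refine (Finset.sum_le_card_nsmul _ _ 1 (fun j _ => hZ j)).trans ?_
    simpa using Finset.card_le_univ s
  let A : Matrix (Cell d q) (Cell d q) (Polynomial ℂ) := fun n n' =>
    (if n = n' then ∑ j, (Polynomial.C (rho d q j (n j : ℕ)) * (Z j * ∏ i, Z i) +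
        Polynomial.C ((rho d q j (n j : ℕ))⁻¹) * ∏ i ∈ Finset.univ.erase j, Z i) else 0)
      + Polynomial.C (dft d q V (fun j => ((n j : ℕ) : ℤ) - ((n' j : ℕ) : ℤ)) - μ * (if n = n' then 1 else 0)) * ∏ i, Z i
  have hA : ∀ n n', (A n n').natDegree ≤ d + 1 := by
    intro n n'
    refine Polynomial.natDegree_add_le_of_degree_le ?_ ?_
    · split_ifs
      · refine Polynomial.natDegree_sum_le_of_forall_le _ _ fun j _ => ?_
        refine Polynomial.natDegree_add_le_of_degree_le ?_ ?_
        · refine (Polynomial.natDegree_C_mul_le _ _).trans (Polynomial.natDegree_mul_le.trans ?_)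
          have := hprod Finset.univ
          have := hZ j
          omega
        · exact (Polynomial.natDegree_C_mul_le _ _).trans ((hprod _).trans (by omega))
      · simp
    · exact (Polynomial.natDegree_C_mul_le _ _).trans ((hprod _).trans (by omega))
  refine ⟨A.det, ?_, ?_⟩
  · rw [Matrix.det_apply]
    refine Polynomial.natDegree_sum_le_of_forall_le _ _ fun σ _ => ?_
    refine (Polynomial.natDegree_smul_le _ _).trans ((Polynomial.natDegree_prod_le _ _).trans ?_)
    refine (Finset.sum_le_card_nsmul _ _ (d + 1) (fun j _ => hA _ _)).trans ?_
    simp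
  · intro y hy
    have hZe : ∀ j, (Z j).eval y = z j + y * u j := fun j => by
      simp only [Z, Polynomial.eval_add, Polynomial.eval_mul, Polynomial.eval_C, Polynomial.eval_X]
    rw [floquetDet, ← Matrix.det_smul, ← Polynomial.coe_evalRingHom, RingHom.map_det]
    congr 1
    ext n n'
    change Polynomial.eval y (A n n') = _
    simp only [A, Polynomial.eval_add, Polynomial.eval_mul, Polynomial.eval_C,
      Polynomial.eval_prod, hZe, Matrix.smul_apply, Matrix.sub_apply, floquetMatrix, smul_eq_mul,
      Matrix.one_apply]
    have key : ∀ j, (rho d q j (n j : ℕ) * ((z j + y * u j) * ∏ i, (z i + y * u i)) +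
        (rho d q j (n j : ℕ))⁻¹ * ∏ i ∈ Finset.univ.erase j, (z i + y * u i)) =
        (∏ i, (z i + y * u i)) * (rho d q j (n j : ℕ) * (z j + y * u j) +
          (rho d q j (n j : ℕ) * (z j + y * u j))⁻¹) := by
      intro j
      have hr := rho_ne_zero d q j (n j : ℕ)
      have hj := hy j
      rw [← Finset.mul_prod_erase Finset.univ (fun i => z i + y * u i) (Finset.mem_univ j)]
      field_simp
    split_ifs with h
    · simp only [Polynomial.eval_finsetSum, Polynomial.eval_add, Polynomial.eval_mul,
        Polynomial.eval_C, Polynomial.eval_prod, hZe, key, ← Finset.mul_sum]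
      ring
    · simp only [Polynomial.eval_zero]
      ring

lemma floquet_leading (d : ℕ) (q : Fin d → ℕ) (V : (Fin d → ℤ) → ℝ)
    (z : ℕ → Fin d → ℂ) (w : Fin d → ℂ) (hw : ∀ j, w j ≠ 0)
    (hz : ∀ j, Tendsto (fun k => z k j / (k : ℂ)) atTop (𝓝 (w j)))
    (μ : ℕ → ℂ) (ν : ℂ) (hμ : Tendsto (fun k => μ k / (k : ℂ)) atTop (𝓝 ν)) :
    Tendsto (fun k : ℕ => floquetDet d q V (z k) (μ k) / (k : ℂ) ^ Fintype.card (Cell d q)) atTop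
      (𝓝 (∏ n, (ev d q n w - ν))) := by
  classical
  have h1 : ∀ k : ℕ, floquetDet d q V (z k) (μ k) / (k : ℂ) ^ Fintype.card (Cell d q) =
      Matrix.det ((k : ℂ)⁻¹ • (floquetMatrix d q V (z k) - μ k • (1 : Matrix (Cell d q) (Cell d q) ℂ))) := by
    intro k
    rw [Matrix.det_smul, floquetDet, inv_pow, div_eq_inv_mul]
  simp_rw [h1]
  rw [← Matrix.det_diagonal]
  refine ((continuous_id.matrix_det).tendsto (Matrix.diagonal fun n => ev d q n w - ν)).comp ?_
  have hk : Tendsto (fun k : ℕ => (k : ℂ)⁻¹) atTop (𝓝 0) := tendsto_inv_atTop_nhds_zero_nat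
  refine tendsto_pi_nhds.mpr fun n => tendsto_pi_nhds.mpr fun n' => ?_
  simp only [Matrix.smul_apply, Matrix.sub_apply, floquetMatrix, smul_eq_mul, Matrix.one_apply,
    Matrix.diagonal_apply]
  have hd := hk.mul_const (dft d q V (fun j => ((n j : ℕ) : ℤ) - ((n' j : ℕ) : ℤ)))
  rw [zero_mul] at hd
  split_ifs with h
  · have hs : Tendsto (fun k : ℕ => ∑ j, (rho d q j (n j : ℕ) * (z k j / k) +
        (rho d q j (n j : ℕ))⁻¹ * ((z k j / k)⁻¹ * ((k : ℂ)⁻¹ * (k : ℂ)⁻¹)))) atTop (𝓝 (ev d q n w)) := by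
      refine tendsto_finsetSum _ fun j _ => ?_
      have := ((hz j).const_mul (rho d q j (n j : ℕ))).add
        ((((hz j).inv₀ (hw j)).mul (hk.mul hk)).const_mul (rho d q j (n j : ℕ))⁻¹)
      simpa using this
    have := (hs.add hd).sub hμ
    rw [add_zero] at this
    refine this.congr' ?_
    filter_upwards [eventually_ge_atTop 1] with k hk1
    have hk0 : (k : ℂ) ≠ 0 := by exact_mod_cast (by omega : k ≠ 0)
    have : (∑ j, (rho d q j (n j : ℕ) * (z k j / k) +
        (rho d q j (n j : ℕ))⁻¹ * ((z k j / k)⁻¹ * ((k : ℂ)⁻¹ * (k : ℂ)⁻¹)))) =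
        (k : ℂ)⁻¹ * ∑ j, (rho d q j (n j : ℕ) * z k j + (rho d q j (n j : ℕ) * z k j)⁻¹) := by
      rw [Finset.mul_sum]
      refine Finset.sum_congr rfl fun j _ => ?_
      rw [inv_div, mul_inv]
      field_simp
    rw [this]
    ring
  · simpa using hd

lemma det_row_special {ι : Type*} [Fintype ι] [DecidableEq ι] (L : Matrix ι ι ℂ) (i0 : ι)
    (h : ∀ i j, i ≠ i0 → i ≠ j → L i j = 0) : L.det = ∏ i, L i i := by
  rw [← Matrix.det_transpose, Matrix.det_apply, Finset.sum_eq_single 1]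
  · simp
  · intro σ _ hσ
    have : ∃ i, i ≠ i0 ∧ σ i ≠ i := by
      by_contra hcon
      push Not at hcon
      apply hσ
      ext i
      by_cases hi : i = i0
      · subst hi
        by_contra hne
        have h2 := hcon (σ i) hne
        exact hne (σ.injective h2)
      · exact hcon i hi
    obtain ⟨i, hi, hσi⟩ := this
    rw [Finset.prod_eq_zero (Finset.mem_univ i), smul_zero]
    exact h _ _ hi hσi.symm
  · simp

lemma floquet_second (d : ℕ) (q : Fin d → ℕ) (hq : ∀ j, 0 < q j) (V : (Fin d → ℤ) → ℝ)
    (u : Fin d → ℂ) (hu : ∀ j, u j ≠ 0) (hu0 : ∑ j, u j = 0) (j0 : Fin d) (x : ℕ → ℂ) (x0 : ℂ)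
    (hx : Tendsto x atTop (𝓝 x0)) (μ : ℂ) :
    Tendsto (fun k : ℕ => floquetDet d q V (fun j => (k : ℂ) * u j + x k * (Pi.single j0 1 : Fin d → ℂ) j) μ /
      (k : ℂ) ^ (Fintype.card (Cell d q) - 1)) atTop
      (𝓝 ((x0 + potentialAvg d q V - μ) * ∏ n ∈ Finset.univ.erase (cellZero d q hq), ev d q n u)) := by
  classical
  set n0 := cellZero d q hq with hn0
  set z : ℕ → Fin d → ℂ := fun k j => (k : ℂ) * u j + x k * (Pi.single j0 1 : Fin d → ℂ) j with hz
  let D : ℕ → Cell d q → ℂ := fun k n => if n = n0 then 1 else (k : ℂ)⁻¹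
  have h1 : ∀ k : ℕ, floquetDet d q V (z k) μ / (k : ℂ) ^ (Fintype.card (Cell d q) - 1) =
      Matrix.det (Matrix.of fun n n' => D k n *
        (floquetMatrix d q V (z k) - μ • (1 : Matrix (Cell d q) (Cell d q) ℂ)) n n') := by
    intro k
    rw [Matrix.det_mul_column, floquetDet, div_eq_inv_mul]
    congr 1
    rw [← Finset.mul_prod_erase Finset.univ _ (Finset.mem_univ n0)]
    rw [Finset.prod_congr rfl (g := fun _ => (k : ℂ)⁻¹)]
    · simp [D]
    · intro n hn
      simp [D, Finset.ne_of_mem_erase hn]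
  change Tendsto (fun k => floquetDet d q V (z k) μ / (k : ℂ) ^ (Fintype.card (Cell d q) - 1)) _ _
  simp_rw [h1]
  let L : Matrix (Cell d q) (Cell d q) ℂ := fun n n' =>
    if n = n0 then (if n = n' then x0 - μ else 0) +
      dft d q V (fun j => ((n j : ℕ) : ℤ) - ((n' j : ℕ) : ℤ))
    else if n = n' then ev d q n u else 0
  have hL : L.det = (x0 + potentialAvg d q V - μ) * ∏ n ∈ Finset.univ.erase n0, ev d q n u := by
    rw [det_row_special L n0, ← Finset.mul_prod_erase Finset.univ _ (Finset.mem_univ n0)]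
    · congr 1
      · simp only [L, if_true, dft_zero]; ring
      · refine Finset.prod_congr rfl fun n hn => ?_
        simp [L, Finset.ne_of_mem_erase hn]
    · intro i j hi hij
      simp [L, hi, hij]
  rw [← hL]
  refine ((continuous_id.matrix_det).tendsto L).comp ?_
  have hk : Tendsto (fun k : ℕ => (k : ℂ)⁻¹) atTop (𝓝 0) := tendsto_inv_atTop_nhds_zero_nat
  have hzk : ∀ j, Tendsto (fun k => z k j / (k : ℂ)) atTop (𝓝 (u j)) := by
    intro j
    have : Tendsto (fun k => u j + x k * (Pi.single j0 1 : Fin d → ℂ) j * (k : ℂ)⁻¹) atTop (𝓝 (u j)) := by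
      simpa using ((hx.mul_const ((Pi.single j0 1 : Fin d → ℂ) j)).mul hk).const_add (u j)
    refine this.congr' ?_
    filter_upwards [eventually_ge_atTop 1] with k hk1
    have hk0 : (k : ℂ) ≠ 0 := by exact_mod_cast (by omega : k ≠ 0)
    simp only [hz]
    field_simp
  have hzi : ∀ j, Tendsto (fun k => (z k j)⁻¹) atTop (𝓝 0) := by
    intro j
    have := ((hzk j).inv₀ (hu j)).mul hk
    rw [mul_zero] at this
    refine this.congr' ?_
    filter_upwards [eventually_ge_atTop 1] with k hk1
    have hk0 : (k : ℂ) ≠ 0 := by exact_mod_cast (by omega : k ≠ 0)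
    rw [inv_div]
    field_simp
  refine tendsto_pi_nhds.mpr fun n => tendsto_pi_nhds.mpr fun n' => ?_
  simp only [Matrix.of_apply, D, L, Matrix.sub_apply, Matrix.smul_apply,
    floquetMatrix, Matrix.one_apply, smul_eq_mul]
  by_cases hn : n = n0
  · simp only [hn, if_true, one_mul]
    split_ifs with h
    · have hs : Tendsto (fun k => ∑ j, (rho d q j (n0 j : ℕ) * z k j + (rho d q j (n0 j : ℕ) * z k j)⁻¹))
          atTop (𝓝 x0) := by
        have hr : ∀ j, rho d q j (n0 j : ℕ) = 1 := fun j => rho_zero d q j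
        simp_rw [hr, one_mul, Finset.sum_add_distrib]
        have e1 : ∀ k, ∑ j, z k j = x k := by
          intro k
          simp [hz, Finset.sum_add_distrib, ← Finset.mul_sum, hu0]
        simp_rw [e1]
        have := tendsto_finsetSum Finset.univ (fun j _ => hzi j)
        simpa using hx.add this
      have := (hs.add_const (dft d q V (fun j => ((n0 j : ℕ) : ℤ) - ((n' j : ℕ) : ℤ)))).sub_const (μ * 1)
      convert this using 2
      ring
    · simp
  · simp only [hn, if_false]
    split_ifs with h
    · have hs : Tendsto (fun k : ℕ => ∑ j, (rho d q j (n j : ℕ) * (z k j / k) +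
          (rho d q j (n j : ℕ))⁻¹ * ((z k j)⁻¹ * (k : ℂ)⁻¹))) atTop (𝓝 (ev d q n u)) := by
        refine tendsto_finsetSum _ fun j _ => ?_
        have := ((hzk j).const_mul (rho d q j (n j : ℕ))).add
          (((hzi j).mul hk).const_mul (rho d q j (n j : ℕ))⁻¹)
        simpa using this
      have := hs.add (hk.mul_const (dft d q V (fun j => ((n j : ℕ) : ℤ) - ((n' j : ℕ) : ℤ)) - μ * 1))
      rw [zero_mul, add_zero] at this
      refine this.congr fun k => ?_
      have e : ∑ j, (rho d q j (n j : ℕ) * (z k j / k) +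
          (rho d q j (n j : ℕ))⁻¹ * ((z k j)⁻¹ * (k : ℂ)⁻¹)) = (k : ℂ)⁻¹ *
          ∑ j, (rho d q j (n j : ℕ) * z k j + (rho d q j (n j : ℕ) * z k j)⁻¹) := by
        rw [Finset.mul_sum]
        refine Finset.sum_congr rfl fun j _ => ?_
        rw [mul_inv]
        ring
      rw [e]
      ring
    · have := hk.mul_const (dft d q V (fun j => ((n j : ℕ) : ℤ) - ((n' j : ℕ) : ℤ)))
      simpa using this

lemma floquetDet_charpoly (d : ℕ) (q : Fin d → ℕ) (V : (Fin d → ℤ) → ℝ) (z : Fin d → ℂ) (μ : ℂ) :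
    floquetDet d q V z μ = (-1) ^ Fintype.card (Cell d q) * (floquetMatrix d q V z).charpoly.eval μ := by
  rw [Matrix.eval_charpoly, floquetDet, ← Matrix.det_neg, neg_sub, Matrix.scalar_apply,
    Matrix.smul_one_eq_diagonal]

lemma floquetDet_zero_finite (d : ℕ) (q : Fin d → ℕ) (V : (Fin d → ℤ) → ℝ) (z : Fin d → ℂ) :
    {μ | floquetDet d q V z μ = 0}.Finite := by
  refine ((floquetMatrix d q V z).charpoly.roots.toFinset.finite_toSet).subset ?_
  intro μ hμ
  simp only [Set.mem_ofPred_eq, floquetDet_charpoly, mul_eq_zero, pow_eq_zero_iff',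
    neg_eq_zero, one_ne_zero, false_and, false_or] at hμ
  simp [(Matrix.charpoly_monic _).ne_zero, hμ]

lemma floquetDet_prod (d : ℕ) (q : Fin d → ℕ) (V : (Fin d → ℤ) → ℝ) (z : Fin d → ℂ)
    (f : Cell d q → ℂ) (hf : Function.Injective f) (h : ∀ n, floquetDet d q V z (f n) = 0) (μ : ℂ) :
    floquetDet d q V z μ = ∏ n, (f n - μ) := by
  have hdvd : (∏ n, (Polynomial.X - Polynomial.C (f n))) ∣ (floquetMatrix d q V z).charpoly := by
    refine Finset.prod_dvd_of_coprime ?_ ?_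
    · intro i _ j _ hij
      exact Polynomial.isCoprime_X_sub_C_of_isUnit_sub
        (isUnit_iff_ne_zero.mpr (sub_ne_zero.mpr (fun h => hij (hf h))))
    · intro n _
      rw [Polynomial.dvd_iff_isRoot, Polynomial.IsRoot]
      have := h n
      rw [floquetDet_charpoly] at this
      simpa using this
  have heq : (floquetMatrix d q V z).charpoly = ∏ n, (Polynomial.X - Polynomial.C (f n)) := by
    refine Polynomial.eq_of_monic_of_dvd_of_natDegree_le
      (Polynomial.monic_prod_of_monic _ _ fun n _ => Polynomial.monic_X_sub_C _)
      (Matrix.charpoly_monic _) hdvd ?_ 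
    rw [Matrix.charpoly_natDegree_eq_dim, Polynomial.natDegree_prod_of_monic _ _
      (fun n _ => Polynomial.monic_X_sub_C _)]
    simp
  rw [floquetDet_charpoly, heq, Polynomial.eval_prod, ← Finset.card_univ, ← Finset.prod_const,
    ← Finset.prod_mul_distrib]
  exact Finset.prod_congr rfl fun n _ => by simp

lemma eventually_injective {ι : Type*} [Finite ι] (f : ℕ → ι → ℂ) (c : ι → ℂ)
    (hc : Function.Injective c) (h : ∀ n, Tendsto (fun k => f k n) atTop (𝓝 (c n))) :
    ∀ᶠ k in atTop, Function.Injective (f k) := by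
  have : ∀ p : ι × ι, ∀ᶠ k in atTop, p.1 ≠ p.2 → f k p.1 ≠ f k p.2 := by
    rintro ⟨a, b⟩
    by_cases hab : a = b
    · simp [hab]
    · have h1 := (h a).sub (h b)
      have := h1.eventually_ne (sub_ne_zero.mpr (fun h => hab (hc h)))
      filter_upwards [this] with k hk _
      exact sub_ne_zero.mp hk
  filter_upwards [eventually_all.mpr this] with k hk a b hab
  by_contra hne
  exact hk (a, b) hne hab

lemma frequently_affine (s : Finset (ℂ × ℂ)) (hs : ∀ p ∈ s, p.1 ≠ 0) (x0 : ℂ) :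
    ∀ᶠ x in 𝓝[≠] x0, ∀ p ∈ s, p.1 * (x - x0) + p.2 ≠ 0 := by
  rw [eventually_all_finset]
  intro p hp
  have h1 := hs p hp
  by_cases h2 : p.2 = 0
  · filter_upwards [self_mem_nhdsWithin] with x hx
    simp [h1, h2, sub_ne_zero.mpr hx]
  · refine Filter.Eventually.filter_mono nhdsWithin_le_nhds ?_
    have : ContinuousAt (fun x => p.1 * (x - x0) + p.2) x0 := by fun_prop
    exact this.eventually_ne (by simpa using h2)

lemma floquet_branches (d : ℕ) (q : Fin d → ℕ) (V : (Fin d → ℤ) → ℝ)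
    (z : ℕ → Fin d → ℂ) (w : Fin d → ℂ) (hw : ∀ j, w j ≠ 0)
    (hz : ∀ j, Tendsto (fun k => z k j / (k : ℂ)) atTop (𝓝 (w j)))
    (hinj : Function.Injective (fun n => ev d q n w)) :
    ∃ a : ℕ → Cell d q → ℂ, (∀ n, Tendsto (fun k => a k n / (k : ℂ)) atTop (𝓝 (ev d q n w))) ∧
      ∀ᶠ k in atTop, Function.Injective (a k) ∧
        ∀ μ, floquetDet d q V (z k) μ = ∏ n, (a k n - μ) := by
  classical
  set Q := Fintype.card (Cell d q)
  have hroot : ∀ n, ∃ x : ℕ → ℂ, Tendsto x atTop (𝓝 (ev d q n w)) ∧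
      ∀ᶠ k in atTop, floquetDet d q V (z k) ((k : ℂ) * x k) = 0 := by
    intro n
    let p : ℕ → Polynomial ℂ := fun k => Polynomial.C ((-1) ^ Q / (k : ℂ) ^ Q) *
      (floquetMatrix d q V (z k)).charpoly.comp (Polynomial.C (k : ℂ) * Polynomial.X)
    have hp : ∀ k x, (p k).eval x = floquetDet d q V (z k) ((k : ℂ) * x) / (k : ℂ) ^ Q := by
      intro k x
      simp only [p, Polynomial.eval_mul, Polynomial.eval_C, Polynomial.eval_comp, Polynomial.eval_X,
        floquetDet_charpoly]
      ring
    have hR : ∃ x : ℕ → ℂ, Tendsto x atTop (𝓝 (ev d q n w)) ∧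
        ∀ᶠ k in atTop, (p k).eval (x k) = 0 := by
      refine root_near p Q ?_ (fun x => ∏ m, (ev d q m w - x)) (ev d q n w) ?_ ?_ ?_
      · intro k
        refine (Polynomial.natDegree_C_mul_le _ _).trans (Polynomial.natDegree_comp_le.trans ?_)
        rw [Matrix.charpoly_natDegree_eq_dim]
        have := (Polynomial.natDegree_C_mul_le (k : ℂ) Polynomial.X).trans Polynomial.natDegree_X_le
        exact (Nat.mul_le_mul_left _ this).trans (by simp [Q])
      · refine Filter.Eventually.of_forall fun x => ?_
        simp_rw [hp]
        refine floquet_leading d q V z w hw hz _ x ?_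
        refine (tendsto_const_nhds (x := x)).congr' ?_
        filter_upwards [eventually_ge_atTop 1] with k hk1
        have hk0 : (k : ℂ) ≠ 0 := by exact_mod_cast (by omega : k ≠ 0)
        field_simp
      · exact Finset.prod_eq_zero (Finset.mem_univ n) (sub_self _)
      · have := frequently_affine (Finset.univ.image fun m => ((-1 : ℂ), ev d q m w - ev d q n w))
          (by simp) (ev d q n w)
        refine (Filter.Eventually.frequently ?_).filter_mono (nhdsWithin_le_nhds (s := {ev d q n w}ᶜ))
        filter_upwards [this] with x hx
        rw [Finset.prod_ne_zero_iff]
        intro m _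
        have := hx _ (Finset.mem_image_of_mem _ (Finset.mem_univ m))
        simpa using this
    obtain ⟨x, hx, hx0⟩ := hR
    refine ⟨x, hx, ?_⟩
    filter_upwards [hx0, eventually_ge_atTop 1] with k hk hk1
    have hk0 : (k : ℂ) ≠ 0 := by exact_mod_cast (by omega : k ≠ 0)
    rw [hp, div_eq_zero_iff] at hk
    exact hk.resolve_right (pow_ne_zero _ hk0)
  choose x hx hx0 using hroot
  have hlim : ∀ n, Tendsto (fun k : ℕ => (k : ℂ) * x n k / (k : ℂ)) atTop (𝓝 (ev d q n w)) := by
    intro n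
    refine (hx n).congr' ?_
    filter_upwards [eventually_ge_atTop 1] with k hk1
    have hk0 : (k : ℂ) ≠ 0 := by exact_mod_cast (by omega : k ≠ 0)
    field_simp
  refine ⟨fun k n => (k : ℂ) * x n k, hlim, ?_⟩
  filter_upwards [eventually_injective _ _ hinj hlim, eventually_all.mpr hx0] with k hk1 hk2
  have hinj' : Function.Injective (fun n => (k : ℂ) * x n k) := by
    intro a b hab
    apply hk1
    simp only at hab ⊢
    rw [hab]
  exact ⟨hinj', fun μ => floquetDet_prod d q V (z k) _ hinj' hk2 μ⟩

lemma tendsto_line (z u : ℂ) : Tendsto (fun k : ℕ => (z + k * u) / (k : ℂ)) atTop (𝓝 u) := by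
  have hk : Tendsto (fun k : ℕ => (k : ℂ)⁻¹) atTop (𝓝 0) := tendsto_inv_atTop_nhds_zero_nat
  have : Tendsto (fun k : ℕ => z * (k : ℂ)⁻¹ + u) atTop (𝓝 u) := by
    simpa using (hk.const_mul z).add_const u
  refine this.congr' ?_
  filter_upwards [eventually_ge_atTop 1] with k hk1
  have hk0 : (k : ℂ) ≠ 0 := by exact_mod_cast (by omega : k ≠ 0)
  field_simp

lemma eventually_ne_of_scaled (f : ℕ → ℂ) (w : ℂ) (hw : w ≠ 0)
    (h : Tendsto (fun k => f k / (k : ℂ)) atTop (𝓝 w)) : ∀ᶠ k in atTop, f k ≠ 0 := by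
  filter_upwards [h.eventually_ne hw] with k hk h0
  simp [h0] at hk

lemma floquet_line (d : ℕ) (q : Fin d → ℕ) (V Y : (Fin d → ℤ) → ℝ) (z u : Fin d → ℂ)
    (hz : ∀ j, z j ≠ 0) (hu : ∀ j, u j ≠ 0) (μ μ' : ℂ)
    (h : ∀ᶠ k : ℕ in atTop, floquetDet d q V (fun j => z j + k * u j) μ =
      floquetDet d q Y (fun j => z j + k * u j) μ') :
    floquetDet d q V z μ = floquetDet d q Y z μ' := by
  obtain ⟨p, -, hp⟩ := floquet_poly d q V z u μ
  obtain ⟨p', -, hp'⟩ := floquet_poly d q Y z u μ'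
  have hne : ∀ᶠ k : ℕ in atTop, ∀ j, z j + k * u j ≠ 0 :=
    eventually_all.mpr fun j => eventually_ne_of_scaled _ _ (hu j) (tendsto_line _ _)
  have hpp : p = p' := by
    refine Polynomial.eq_of_infinite_eval_eq p p' ?_
    obtain ⟨N, hN⟩ := eventually_atTop.mp (h.and hne)
    refine Set.Infinite.mono (s := (fun k : ℕ => (k : ℂ)) '' Set.Ici N) ?_
      ((Set.Ici_infinite N).image (Nat.cast_injective.injOn))
    rintro _ ⟨k, hk, rfl⟩
    obtain ⟨h1, h2⟩ := hN k hk
    simp only [Set.mem_ofPred_eq]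
    rw [hp _ h2, hp' _ h2, h1]
  have h1 := hp 0 (by simpa using hz)
  have h2 := hp' 0 (by simpa using hz)
  rw [hpp, h2] at h1
  simp only [zero_mul, add_zero] at h1
  exact (mul_left_cancel₀ (pow_ne_zero _ (Finset.prod_ne_zero_iff.mpr fun j _ => hz j)) h1).symm

lemma exists_generic {d : ℕ} (S : Set (Fin d → ℂ)) (hS : S.Finite) :
    ∃ u : Fin d → ℂ, ∀ l ∈ S, l ≠ 0 → ∑ j, l j * u j ≠ 0 := by
  classical
  let f : (Fin d → ℂ) → Polynomial ℂ := fun l => ∑ j, Polynomial.C (l j) * Polynomial.X ^ (j : ℕ)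
  have hf : ∀ l, l ≠ 0 → f l ≠ 0 := by
    intro l hl h0
    apply hl
    funext j
    have := congrArg (fun p => p.coeff (j : ℕ)) h0
    simp only [f, Polynomial.finsetSum_coeff, Polynomial.coeff_C_mul, Polynomial.coeff_X_pow,
      Polynomial.coeff_zero] at this
    simpa [Fin.val_inj] using this
  let T := hS.toFinset.filter (fun l => l ≠ 0)
  have hT : ∏ l ∈ T, f l ≠ 0 := by
    rw [Finset.prod_ne_zero_iff]
    intro l hl
    exact hf l (by simpa [T] using (Finset.mem_filter.mp hl).2)
  obtain ⟨τ, hτ⟩ : ∃ τ, (∏ l ∈ T, f l).eval τ ≠ 0 := by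
    by_contra hcon
    push Not at hcon
    exact hT (Polynomial.funext fun x => by simpa using hcon x)
  refine ⟨fun j => τ ^ (j : ℕ), fun l hl hl0 => ?_⟩
  rw [Polynomial.eval_prod, Finset.prod_ne_zero_iff] at hτ
  have := hτ l (by simp [T, hl, hl0])
  simpa [f, Polynomial.eval_finsetSum] using this

lemma ev_zero (d : ℕ) (q : Fin d → ℕ) (hq : ∀ j, 0 < q j) (u : Fin d → ℂ) :
    ev d q (cellZero d q hq) u = ∑ j, u j := by
  simp only [ev]
  refine Finset.sum_congr rfl fun j _ => ?_
  have : rho d q j ((cellZero d q hq j : ℕ) : ℤ) = 1 := rho_zero d q j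
  rw [this, one_mul]

/-- vector of roots of unity -/
def rv (d : ℕ) (q : Fin d → ℕ) (n : Cell d q) : Fin d → ℂ := fun j => rho d q j (n j : ℕ)

lemma rv_inj (d : ℕ) (q : Fin d → ℕ) (hq : ∀ j, 0 < q j) : Function.Injective (rv d q) := by
  intro n n' h
  funext j
  exact rho_inj d q hq j _ _ (congrFun h j)

lemma ev_eq (d : ℕ) (q : Fin d → ℕ) (n : Cell d q) (u : Fin d → ℂ) :
    ev d q n u = ∑ j, rv d q n j * u j := rfl

lemma generic2 (d : ℕ) (q : Fin d → ℕ) (hq : ∀ j, 0 < q j) :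
    ∃ u : Fin d → ℂ, (∀ j, u j ≠ 0) ∧ Function.Injective (fun n => ev d q n u) := by
  classical
  obtain ⟨u, hu⟩ := exists_generic
    (Set.range (fun j : Fin d => (Pi.single j 1 : Fin d → ℂ)) ∪
      Set.range (fun p : Cell d q × Cell d q => rv d q p.1 - rv d q p.2))
    ((Set.finite_range _).union (Set.finite_range _))
  refine ⟨u, fun j => ?_, fun n n' h => ?_⟩
  · have := hu _ (Or.inl ⟨j, rfl⟩) (by simp)
    simpa [Pi.single_apply] using this
  · by_contra hne
    refine hu _ (Or.inr ⟨(n, n'), rfl⟩) (sub_ne_zero.mpr fun h => hne (rv_inj d q hq h)) ?_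
    simp only [ev_eq] at h
    simp [sub_mul, Finset.sum_sub_distrib, h]

/-- inclusion of spectra implies equality of determinants -/
lemma floquet_of_incl (d : ℕ) (q : Fin d → ℕ) (hq : ∀ j, 0 < q j) (V Y : (Fin d → ℤ) → ℝ) (c : ℂ)
    (h : ∀ z : Fin d → ℂ, (∀ j, z j ≠ 0) → ∀ b, floquetDet d q V z b = 0 →
      floquetDet d q Y z (b - c) = 0) (z : Fin d → ℂ) (hz : ∀ j, z j ≠ 0) (μ : ℂ) :
    floquetDet d q V z μ = floquetDet d q Y z (μ - c) := by
  obtain ⟨u, hu, hinj⟩ := generic2 d q hq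
  obtain ⟨a, -, ha⟩ := floquet_branches d q V (fun k j => z j + k * u j) u hu
    (fun j => tendsto_line _ _) hinj
  refine floquet_line d q V Y z u hz hu _ _ ?_
  have hne : ∀ᶠ k : ℕ in atTop, ∀ j, z j + k * u j ≠ 0 :=
    eventually_all.mpr fun j => eventually_ne_of_scaled _ _ (hu j) (tendsto_line _ _)
  filter_upwards [ha, hne] with k hk hk2
  rw [floquetDet_prod d q Y _ (fun n => a k n - c)
    (fun n n' h => hk.1 (by simpa using h)) ?_ (μ - c), hk.2]
  · exact Finset.prod_congr rfl fun n _ => by ring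
  · intro n
    refine h _ hk2 _ ?_
    rw [hk.2]
    exact Finset.prod_eq_zero (Finset.mem_univ n) (sub_self _)

lemma rho_eq_one (d : ℕ) (q : Fin d → ℕ) (hq : ∀ j, 0 < q j) (n : Cell d q) (j : Fin d)
    (h : rho d q j (n j : ℕ) = 1) : n j = cellZero d q hq j := by
  refine rho_inj d q hq j _ _ ?_
  rw [h]
  exact (rho_zero d q j).symm

lemma generic1 (d : ℕ) (hd : 2 ≤ d) (q : Fin d → ℕ) (hq : ∀ j, 0 < q j)
    (hco : ∀ i j : Fin d, i ≠ j → Nat.Coprime (q i) (q j)) :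
    ∃ u : Fin d → ℂ, (∀ j, u j ≠ 0) ∧ ∑ j, u j = 0 ∧
      ∀ n, n ≠ cellZero d q hq → ev d q n u ≠ 0 := by
  classical
  have hd0 : (d : ℂ) ≠ 0 := by exact_mod_cast (by omega : d ≠ 0)
  have hother : ∀ j : Fin d, ∃ i : Fin d, i ≠ j := by
    intro j
    by_cases hj : j.1 = 0
    · exact ⟨⟨1, by omega⟩, fun h => by simp [← h] at hj⟩
    · exact ⟨⟨0, by omega⟩, fun h => hj (by rw [← h])⟩
  let pr : (Fin d → ℂ) → (Fin d → ℂ) := fun l j => l j - (∑ i, l i) / d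
  obtain ⟨y, hy⟩ := exists_generic
    (Set.range (fun j : Fin d => pr (Pi.single j 1 : Fin d → ℂ)) ∪
      Set.range (fun n : Cell d q => pr (rv d q n)))
    ((Set.finite_range _).union (Set.finite_range _))
  have hpair : ∀ l : Fin d → ℂ, ∑ j, l j * pr y j = ∑ j, pr l j * y j := by
    intro l
    simp only [pr, mul_sub, sub_mul, Finset.sum_sub_distrib, ← Finset.sum_mul, ← Finset.mul_sum]
    ring
  have hconst : ∀ l : Fin d → ℂ, pr l = 0 → ∀ i j, l i = l j := by
    intro l hl i j
    have h1 := congrFun hl i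
    have h2 := congrFun hl j
    simp only [pr, Pi.zero_apply, sub_eq_zero] at h1 h2
    rw [h1, h2]
  refine ⟨pr y, fun j => ?_, ?_, fun n hn => ?_⟩
  · have := hy _ (Or.inl ⟨j, rfl⟩) (by
      intro h
      obtain ⟨i, hi⟩ := hother j
      have := hconst _ h i j
      simp [hi] at this)
    rw [← hpair] at this
    simpa [Pi.single_apply] using this
  · simp only [pr, Finset.sum_sub_distrib, Finset.sum_const, Finset.card_univ, Fintype.card_fin,
      nsmul_eq_mul]
    field_simp
    ring
  · rw [ev_eq, hpair]
    refine hy _ (Or.inr ⟨n, rfl⟩) ?_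
    intro h
    apply hn
    funext j
    obtain ⟨i, hi⟩ := hother j
    refine rho_eq_one d q hq n j ?_
    have h1 : rho d q i (n i : ℕ) = rho d q j (n j : ℕ) := hconst _ h i j
    refine eq_one_of_coprime_pow (hco i j hi) ?_ (rho_pow d q hq j _)
    rw [← h1]
    exact rho_pow d q hq i _

lemma step1 (d : ℕ) (hd : 2 ≤ d) (q : Fin d → ℕ) (hq : ∀ j, 0 < q j)
    (hco : ∀ i j : Fin d, i ≠ j → Nat.Coprime (q i) (q j)) (V Y : (Fin d → ℤ) → ℝ)
    (μ : ℂ) (F : Set ℂ) (hF : F.Finite)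
    (h : ∀ z : Fin d → ℂ, (∀ j, z j ≠ 0) → floquetDet d q V z μ = 0 →
      ∃ μ' ∈ F, floquetDet d q Y z μ' = 0) :
    μ + (potentialAvg d q Y - potentialAvg d q V) ∈ F := by
  classical
  obtain ⟨u, hu, hu0, hun⟩ := generic1 d hd q hq hco
  let j0 : Fin d := ⟨0, by omega⟩
  set Q := Fintype.card (Cell d q)
  have hPi : ∏ n ∈ Finset.univ.erase (cellZero d q hq), ev d q n u ≠ 0 :=
    Finset.prod_ne_zero_iff.mpr fun n hn => hun n (Finset.ne_of_mem_erase hn)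
  set K := ∏ n ∈ Finset.univ.erase (cellZero d q hq), ev d q n u with hK
  have hzk : ∀ (x : ℕ → ℂ) (x0 : ℂ), Tendsto x atTop (𝓝 x0) → ∀ j, Tendsto (fun k : ℕ =>
      ((k : ℂ) * u j + x k * (Pi.single j0 1 : Fin d → ℂ) j) / (k : ℂ)) atTop (𝓝 (u j)) := by
    intro x x0 hx j
    have hk : Tendsto (fun k : ℕ => (k : ℂ)⁻¹) atTop (𝓝 0) := tendsto_inv_atTop_nhds_zero_nat
    have : Tendsto (fun k => u j + x k * (Pi.single j0 1 : Fin d → ℂ) j * (k : ℂ)⁻¹) atTop (𝓝 (u j)) := by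
      simpa using ((hx.mul_const ((Pi.single j0 1 : Fin d → ℂ) j)).mul hk).const_add (u j)
    refine this.congr' ?_
    filter_upwards [eventually_ge_atTop 1] with k hk1
    have hk0 : (k : ℂ) ≠ 0 := by exact_mod_cast (by omega : k ≠ 0)
    field_simp
  have hzne : ∀ (x : ℕ → ℂ) (x0 : ℂ), Tendsto x atTop (𝓝 x0) → ∀ᶠ k : ℕ in atTop, ∀ j,
      (k : ℂ) * u j + x k * (Pi.single j0 1 : Fin d → ℂ) j ≠ 0 := by
    intro x x0 hx
    exact eventually_all.mpr fun j => eventually_ne_of_scaled _ _ (hu j) (hzk x x0 hx j)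
  choose p hpdeg hp using fun k : ℕ => floquet_poly d q V (fun j => (k : ℂ) * u j)
    (Pi.single j0 1 : Fin d → ℂ) μ
  let p' : ℕ → Polynomial ℂ := fun k => Polynomial.C (1 / ((k : ℂ) ^ d) ^ Q / (k : ℂ) ^ (Q - 1)) * p k
  have hp' : ∀ (k : ℕ) (x : ℂ), (∀ j, (k : ℂ) * u j + x * (Pi.single j0 1 : Fin d → ℂ) j ≠ 0) →
      (p' k).eval x = (∏ j, ((k : ℂ) * u j + x * (Pi.single j0 1 : Fin d → ℂ) j) / (k : ℂ)) ^ Q *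
        (floquetDet d q V (fun j => (k : ℂ) * u j + x * (Pi.single j0 1 : Fin d → ℂ) j) μ /
          (k : ℂ) ^ (Q - 1)) := by
    intro k x hne
    simp only [p', Polynomial.eval_mul, Polynomial.eval_C]
    rw [hp k x hne, Finset.prod_div_distrib, Finset.prod_const, Finset.card_univ, Fintype.card_fin,
      div_pow]
    ring
  have hR : ∃ x : ℕ → ℂ, Tendsto x atTop (𝓝 (μ - potentialAvg d q V)) ∧
      ∀ᶠ k in atTop, (p' k).eval (x k) = 0 := by
    refine root_near p' (Q * (d + 1)) (fun k => (Polynomial.natDegree_C_mul_le _ _).trans (hpdeg k))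
      (fun x => (∏ j, u j) ^ Q * ((x + potentialAvg d q V - μ) * K)) _ ?_ ?_ ?_
    · refine Filter.Eventually.of_forall fun x => ?_
      have h1 := floquet_second d q hq V u hu hu0 j0 (fun _ => x) x tendsto_const_nhds μ
      have h2 := (tendsto_finsetProd Finset.univ
        (fun j _ => hzk (fun _ => x) x tendsto_const_nhds j)).pow Q
      refine (h2.mul h1).congr' ?_
      filter_upwards [hzne (fun _ => x) x tendsto_const_nhds] with k hk
      exact (hp' k x hk).symm
    · simp
    · have := frequently_affine {((1 : ℂ), (0 : ℂ))} (by simp) (μ - potentialAvg d q V)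
      refine (Filter.Eventually.frequently ?_).filter_mono
        (nhdsWithin_le_nhds (s := {μ - (potentialAvg d q V : ℂ)}ᶜ))
      filter_upwards [this] with x hx
      have := hx _ (Finset.mem_singleton_self _)
      refine mul_ne_zero (pow_ne_zero _ (Finset.prod_ne_zero_iff.mpr fun j _ => hu j))
        (mul_ne_zero ?_ hPi)
      intro h0
      apply this
      simp only
      linear_combination h0
  obtain ⟨x, hx, hx0⟩ := hR
  have hlim := tendsto_finsetProd hF.toFinset (fun μ' _ => floquet_second d q hq Y u hu hu0 j0 x _ hx μ')
  have hev : ∀ᶠ k : ℕ in atTop, ∏ μ' ∈ hF.toFinset, floquetDet d q Y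
      (fun j => (k : ℂ) * u j + x k * (Pi.single j0 1 : Fin d → ℂ) j) μ' /
      (k : ℂ) ^ (Q - 1) = 0 := by
    filter_upwards [hx0, hzne x _ hx, eventually_ge_atTop 1] with k hk hne hk1
    have hk0 : (k : ℂ) ≠ 0 := by exact_mod_cast (by omega : k ≠ 0)
    rw [hp' k _ hne] at hk
    have hpr : (∏ j, ((k : ℂ) * u j + x k * (Pi.single j0 1 : Fin d → ℂ) j) / (k : ℂ)) ^ Q ≠ 0 :=
      pow_ne_zero _ (Finset.prod_ne_zero_iff.mpr fun j _ => div_ne_zero (hne j) hk0)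
    have h2 := (mul_eq_zero.mp hk).resolve_left hpr
    have h3 := (div_eq_zero_iff.mp h2).resolve_right (pow_ne_zero _ hk0)
    obtain ⟨μ', hμ', h4⟩ := h _ hne h3
    refine Finset.prod_eq_zero (hF.mem_toFinset.mpr hμ') ?_
    rw [h4, zero_div]
  have hzero := tendsto_nhds_unique hlim ((tendsto_const_nhds (x := (0 : ℂ))).congr'
    (hev.mono fun k hk => hk.symm))
  rw [Finset.prod_eq_zero_iff] at hzero
  obtain ⟨μ', hμ', h5⟩ := hzero
  have h6 := (mul_eq_zero.mp h5).resolve_right hPi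
  have : μ + (potentialAvg d q Y - potentialAvg d q V) = μ' := by linear_combination h6
  rw [this]
  exact hF.mem_toFinset.mp hμ'

lemma generic3 (d1 d2 : ℕ) (q1 : Fin d1 → ℕ) (q2 : Fin d2 → ℕ) (hq1 : ∀ j, 0 < q1 j)
    (hq2 : ∀ j, 0 < q2 j) (i0 : Fin d1) (j0 : Fin d2)
    (hco : ∀ j, Nat.Coprime (q1 i0) (q2 j)) :
    ∃ (u : Fin d1 → ℂ) (y : Fin d2 → ℂ), (∀ j, u j ≠ 0) ∧ (∀ j, y j ≠ 0) ∧ ∑ j, y j = 1 ∧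
      Function.Injective (fun n => ev d1 q1 n u) ∧ Function.Injective (fun n => ev d2 q2 n y) ∧
      (∀ n, ev d1 q1 n u ≠ 0) ∧
      ∀ m n k, ev d1 q1 m u = ev d2 q2 k y * ev d1 q1 n u → m = n ∧ k = cellZero d2 q2 hq2 := by
  classical
  obtain ⟨y', hy'⟩ := exists_generic
    (((Set.range (fun j : Fin d2 => (Pi.single j 1 : Fin d2 → ℂ)) ∪
      Set.range (fun p : Cell d2 q2 × Cell d2 q2 => rv d2 q2 p.1 - rv d2 q2 p.2)) ∪
      Set.range (fun p : Cell d2 q2 × Fin (q1 i0) × Fin (q1 i0) => fun j =>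
        rho d1 q1 i0 (p.2.1 : ℕ) * rv d2 q2 p.1 j - rho d1 q1 i0 (p.2.2 : ℕ))) ∪ {fun _ => 1})
    ((((Set.finite_range _).union (Set.finite_range _)).union (Set.finite_range _)).union
      (Set.finite_singleton _))
  have hσ : ∑ j, y' j ≠ 0 := by
    have := hy' _ (Or.inr rfl) (fun h => one_ne_zero (congrFun h j0))
    simpa using this
  set σ := ∑ j, y' j with hσd
  let y : Fin d2 → ℂ := fun j => y' j / σ
  have hevy : ∀ k, ev d2 q2 k y = ev d2 q2 k y' / σ := by
    intro k
    simp only [ev, y, Finset.sum_div, mul_div_assoc]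
  have hyinj : Function.Injective (fun n => ev d2 q2 n y) := by
    intro n n' h
    simp only [hevy] at h
    by_contra hne
    refine hy' _ (Or.inl (Or.inl (Or.inr ⟨(n, n'), rfl⟩)))
      (sub_ne_zero.mpr fun h => hne (rv_inj d2 q2 hq2 h)) ?_
    rw [div_left_inj' hσ] at h
    simp only [ev_eq] at h
    simp [sub_mul, Finset.sum_sub_distrib, h]
  have hg : ∀ k, k ≠ cellZero d2 q2 hq2 → ∀ n m : Fin (q1 i0),
      rho d1 q1 i0 (n : ℕ) * ev d2 q2 k y ≠ rho d1 q1 i0 (m : ℕ) := by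
    intro k hk n m h
    refine hy' _ (Or.inl (Or.inr ⟨(k, n, m), rfl⟩)) ?_ ?_
    · intro h0
      apply hk
      funext j
      refine rho_eq_one d2 q2 hq2 k j ?_
      refine eq_one_of_coprime_pow (hco j) ?_ (rho_pow d2 q2 hq2 j _)
      have h1 := congrFun h0 j
      simp only [Pi.zero_apply, sub_eq_zero, rv] at h1
      have h2 := congrArg (· ^ (q1 i0)) h1
      simpa [mul_pow, rho_pow d1 q1 hq1] using h2
    · rw [hevy] at h
      simp only [sub_mul, Finset.sum_sub_distrib, mul_assoc, ← Finset.mul_sum]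
      rw [← ev_eq, ← hσd, ← h]
      field_simp
      ring
  obtain ⟨u, hu⟩ := exists_generic
    ((Set.range (fun j : Fin d1 => (Pi.single j 1 : Fin d1 → ℂ)) ∪
      Set.range (fun n : Cell d1 q1 => rv d1 q1 n)) ∪
      Set.range (fun p : (Cell d1 q1 × Cell d1 q1) × Cell d2 q2 => fun j =>
        rv d1 q1 p.1.1 j - ev d2 q2 p.2 y * rv d1 q1 p.1.2 j))
    (((Set.finite_range _).union (Set.finite_range _)).union (Set.finite_range _))
  have hsum1 : ∑ j, y j = 1 := by
    simp only [y, ← Finset.sum_div, ← hσd]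
    exact div_self hσ
  have hmain : ∀ m n k, ev d1 q1 m u = ev d2 q2 k y * ev d1 q1 n u →
      m = n ∧ k = cellZero d2 q2 hq2 := by
    intro m n k h
    have hz : (fun j => rv d1 q1 m j - ev d2 q2 k y * rv d1 q1 n j) = 0 := by
      by_contra hne
      refine hu _ (Or.inr ⟨((m, n), k), rfl⟩) hne ?_
      simp only [sub_mul, Finset.sum_sub_distrib, mul_assoc, ← Finset.mul_sum]
      rw [← ev_eq, ← ev_eq, h, sub_self]
    have hk : k = cellZero d2 q2 hq2 := by
      by_contra hk
      have h1 := congrFun hz i0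
      simp only [Pi.zero_apply, sub_eq_zero, rv] at h1
      refine hg k hk (n i0) (m i0) ?_
      rw [h1, mul_comm]
    refine ⟨?_, hk⟩
    apply rv_inj d1 q1 hq1
    funext j
    have h1 := congrFun hz j
    rw [hk, ev_zero, hsum1] at h1
    simpa [sub_eq_zero] using h1
  refine ⟨u, y, fun j => ?_, fun j => ?_, hsum1, ?_, hyinj, ?_, hmain⟩
  · have := hu _ (Or.inl (Or.inl ⟨j, rfl⟩)) (by simp)
    simpa [Pi.single_apply] using this
  · have := hy' _ (Or.inl (Or.inl (Or.inl ⟨j, rfl⟩))) (by simp)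
    refine div_ne_zero ?_ hσ
    simpa [Pi.single_apply] using this
  · intro m n h
    refine (hmain m n (cellZero d2 q2 hq2) ?_).1
    rw [ev_zero, hsum1, one_mul]
    exact h
  · intro n
    exact hu _ (Or.inl (Or.inr ⟨n, rfl⟩)) (fun h => rho_ne_zero d1 q1 i0 _ (congrFun h i0))

lemma solve_z (d : ℕ) (q : Fin d → ℕ) (hq : ∀ j, 0 < q j) (V : (Fin d → ℤ) → ℝ) (v : Fin d → ℂ)
    (hv : ∀ j, v j ≠ 0) (j0 : Fin d) (b : ℕ → ℂ)
    (hb : Tendsto (fun k => b k / (k : ℂ)) atTop (𝓝 (∑ j, v j))) :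
    ∃ z : ℕ → Fin d → ℂ, (∀ j, Tendsto (fun k => z k j / (k : ℂ)) atTop (𝓝 (v j))) ∧
      ∀ᶠ k in atTop, floquetDet d q V (z k) (b k) = 0 := by
  classical
  set Q := Fintype.card (Cell d q)
  let B : ℕ → Fin d → ℂ := fun k j => (k : ℂ) * (Function.update v j0 0) j
  let E : ℕ → Fin d → ℂ := fun k j => (k : ℂ) * (Pi.single j0 1 : Fin d → ℂ) j
  have hBE : ∀ k y, (fun j => B k j + y * E k j) = fun j => (k : ℂ) * Function.update v j0 y j := by
    intro k y
    funext j
    by_cases hj : j = j0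
    · subst hj; simp [B, E, mul_comm]
    · simp [B, E, hj]
  have hBE' : ∀ k y j, B k j + y * E k j = (k : ℂ) * Function.update v j0 y j :=
    fun k y j => congrFun (hBE k y) j
  have hupd : ∀ y, y ≠ 0 → ∀ j, Function.update v j0 y j ≠ 0 := by
    intro y hy j
    by_cases hj : j = j0
    · subst hj; simpa using hy
    · simpa [hj] using hv j
  choose p hpdeg hp using fun k : ℕ => floquet_poly d q V (B k) (E k) (b k)
  let p' : ℕ → Polynomial ℂ := fun k => Polynomial.C (1 / ((k : ℂ) ^ d) ^ Q / (k : ℂ) ^ Q) * p k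
  have hp' : ∀ (k : ℕ) (y : ℂ), 1 ≤ k → y ≠ 0 →
      (p' k).eval y = (∏ j, Function.update v j0 y j) ^ Q *
        (floquetDet d q V (fun j => (k : ℂ) * Function.update v j0 y j) (b k) / (k : ℂ) ^ Q) := by
    intro k y hk1 hy
    have hk0 : (k : ℂ) ≠ 0 := by exact_mod_cast (by omega : k ≠ 0)
    simp only [p', Polynomial.eval_mul, Polynomial.eval_C]
    rw [hp k y (fun j => by rw [hBE']; exact mul_ne_zero hk0 (hupd y hy j)), hBE]
    rw [Finset.prod_mul_distrib, Finset.prod_const, Finset.card_univ, Fintype.card_fin, mul_pow]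
    have h1 : ((k : ℂ) ^ d) ^ Q ≠ 0 := pow_ne_zero _ (pow_ne_zero _ hk0)
    field_simp
    have hQ : Fintype.card (Cell d q) = Q := rfl
    rw [hQ]
    ring
  have hkmul : ∀ c : ℂ, Tendsto (fun k : ℕ => (k : ℂ) * c / (k : ℂ)) atTop (𝓝 c) := by
    intro c
    simpa using tendsto_line 0 c
  have hevu : ∀ n y, ev d q n (Function.update v j0 y) =
      rho d q j0 (n j0 : ℕ) * (y - v j0) + ev d q n v := by
    intro n y
    have : Function.update v j0 y = fun j => v j + (y - v j0) * (Pi.single j0 1 : Fin d → ℂ) j := by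
      funext j
      by_cases hj : j = j0
      · subst hj; simp
      · simp [hj]
    rw [this]
    simp only [ev, mul_add, Finset.sum_add_distrib]
    rw [add_comm]
    congr 1
    rw [Finset.sum_eq_single j0]
    · simp
    · intro j _ hj; simp [hj]
    · simp
  have hR : ∃ y : ℕ → ℂ, Tendsto y atTop (𝓝 (v j0)) ∧ ∀ᶠ k in atTop, (p' k).eval (y k) = 0 := by
    refine root_near p' (Q * (d + 1)) (fun k => (Polynomial.natDegree_C_mul_le _ _).trans (hpdeg k))
      (fun y => (∏ j, Function.update v j0 y j) ^ Q *
        ∏ n, (ev d q n (Function.update v j0 y) - ∑ j, v j)) _ ?_ ?_ ?_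
    · filter_upwards [isOpen_ne.mem_nhds (hv j0)] with y hy
      have h1 := floquet_leading d q V (fun k j => (k : ℂ) * Function.update v j0 y j)
        (Function.update v j0 y) (hupd y hy) (fun j => hkmul _) b _ hb
      refine (h1.const_mul _).congr' ?_
      filter_upwards [eventually_ge_atTop 1] with k hk1
      exact (hp' k y hk1 hy).symm
    · refine mul_eq_zero_of_right _ (Finset.prod_eq_zero (Finset.mem_univ (cellZero d q hq)) ?_)
      rw [Function.update_eq_self, ev_zero, sub_self]
    · have := frequently_affine (Finset.univ.image fun n : Cell d q =>
        (rho d q j0 (n j0 : ℕ), ev d q n v - ∑ j, v j)) (by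
          intro p hp
          obtain ⟨n, -, rfl⟩ := Finset.mem_image.mp hp
          exact rho_ne_zero _ _ _ _) (v j0)
      refine (Filter.Eventually.frequently ?_).filter_mono (nhdsWithin_le_nhds (s := {v j0}ᶜ))
      filter_upwards [this, (isOpen_ne.mem_nhds (hv j0) : _ ∈ 𝓝 (v j0)) |>
        mem_nhdsWithin_of_mem_nhds] with y hy hy0
      refine mul_ne_zero (pow_ne_zero _ (Finset.prod_ne_zero_iff.mpr fun j _ => hupd y hy0 j))
        (Finset.prod_ne_zero_iff.mpr fun n _ => ?_)
      have := hy _ (Finset.mem_image_of_mem _ (Finset.mem_univ n))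
      rw [hevu]
      simp only at this
      intro h0
      apply this
      linear_combination h0
  obtain ⟨y, hy, hy0⟩ := hR
  refine ⟨fun k j => (k : ℂ) * Function.update v j0 (y k) j, fun j => ?_, ?_⟩
  · have h1 : Tendsto (fun k => Function.update v j0 (y k) j) atTop (𝓝 (v j)) := by
      by_cases hj : j = j0
      · subst hj; simpa using hy
      · simp [hj]
    refine h1.congr' ?_
    filter_upwards [eventually_ge_atTop 1] with k hk1
    have hk0 : (k : ℂ) ≠ 0 := by exact_mod_cast (by omega : k ≠ 0)
    field_simp
  · filter_upwards [hy0, eventually_ge_atTop 1, hy.eventually_ne (hv j0)] with k hk hk1 hyk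
    have hk0 : (k : ℂ) ≠ 0 := by exact_mod_cast (by omega : k ≠ 0)
    rw [hp' k _ hk1 hyk] at hk
    have h2 := (mul_eq_zero.mp hk).resolve_left
      (pow_ne_zero _ (Finset.prod_ne_zero_iff.mpr fun j _ => hupd _ hyk j))
    exact (div_eq_zero_iff.mp h2).resolve_right (pow_ne_zero _ hk0)

lemma const_div_tendsto (c : ℂ) : Tendsto (fun k : ℕ => c / (k : ℂ)) atTop (𝓝 0) := by
  have hk : Tendsto (fun k : ℕ => (k : ℂ)⁻¹) atTop (𝓝 0) := tendsto_inv_atTop_nhds_zero_nat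
  simpa [div_eq_mul_inv] using hk.const_mul c

lemma eventually_sum_ne (f g : ℕ → ℂ) (x y c : ℂ) (hxy : x + y ≠ 0)
    (hf : Tendsto (fun k => f k / (k : ℂ)) atTop (𝓝 x))
    (hg : Tendsto (fun k => g k / (k : ℂ)) atTop (𝓝 y)) :
    ∀ᶠ k in atTop, f k + g k ≠ c := by
  have h := (hf.add hg).sub (const_div_tendsto c)
  rw [sub_zero] at h
  filter_upwards [h.eventually_ne hxy] with k hk h0
  apply hk
  rw [← add_div, h0, sub_self]

lemma step3 (d1 d2 : ℕ) (q1 : Fin d1 → ℕ) (q2 : Fin d2 → ℕ) (hq1 : ∀ j, 0 < q1 j)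
    (hq2 : ∀ j, 0 < q2 j) (i0 : Fin d1) (j0 : Fin d2)
    (hco : ∀ j, Nat.Coprime (q1 i0) (q2 j))
    (V1 Y1 : (Fin d1 → ℤ) → ℝ) (V2 : (Fin d2 → ℤ) → ℝ) (C lam0 : ℂ)
    (hF : ∀ z z2, (∀ j, z j ≠ 0) → (∀ j, z2 j ≠ 0) → ∀ a b, a + b = lam0 →
      floquetDet d1 q1 V1 z a = 0 → floquetDet d2 q2 V2 z2 b = 0 →
      ∃ a2 b2, a2 + b2 = lam0 ∧ floquetDet d1 q1 Y1 z a2 = 0 ∧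
        floquetDet d2 q2 V2 z2 (b2 + C) = 0)
    (z : Fin d1 → ℂ) (hz : ∀ j, z j ≠ 0) (μ : ℂ) :
    floquetDet d1 q1 V1 z (μ - C) = floquetDet d1 q1 Y1 z μ := by
  classical
  obtain ⟨u, y, hu, hy, hy1, huinj, hyinj, hu0, hgen⟩ := generic3 d1 d2 q1 q2 hq1 hq2 i0 j0 hco
  have hzt : ∀ j, Tendsto (fun k : ℕ => (z j + k * u j) / (k : ℂ)) atTop (𝓝 (u j)) :=
    fun j => tendsto_line _ _
  obtain ⟨a, hat, ha⟩ := floquet_branches d1 q1 V1 (fun k j => z j + k * u j) u hu hzt huinj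
  obtain ⟨a2, hat2, ha2⟩ := floquet_branches d1 q1 Y1 (fun k j => z j + k * u j) u hu hzt huinj
  have hne : ∀ᶠ k : ℕ in atTop, ∀ j, z j + k * u j ≠ 0 :=
    eventually_all.mpr fun j => eventually_ne_of_scaled _ _ (hu j) (hzt j)
  refine floquet_line d1 q1 V1 Y1 z u hz hu _ _ ?_
  have key : ∀ n, ∀ᶠ k : ℕ in atTop, a2 k n = a k n + C := by
    intro n
    set e := ev d1 q1 n u with he
    let v : Fin d2 → ℂ := fun j => -e * y j
    have hv : ∀ j, v j ≠ 0 := fun j => mul_ne_zero (neg_ne_zero.mpr (hu0 n)) (hy j)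
    have hev : ∀ l, ev d2 q2 l v = -e * ev d2 q2 l y := by
      intro l
      simp only [ev, v, Finset.mul_sum]
      exact Finset.sum_congr rfl fun j _ => by ring
    have hvinj : Function.Injective (fun l => ev d2 q2 l v) := by
      intro l l2 h
      simp only [hev] at h
      exact hyinj (mul_left_cancel₀ (neg_ne_zero.mpr (hu0 n)) h)
    have hb : Tendsto (fun k => (lam0 - a k n) / (k : ℂ)) atTop (𝓝 (∑ j, v j)) := by
      have h1 : ∑ j, v j = 0 - e := by
        simp only [v]
        rw [← Finset.mul_sum, hy1]
        ring
      rw [h1]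
      refine ((const_div_tendsto lam0).sub (hat n)).congr fun k => ?_
      rw [sub_div]
    obtain ⟨z2, hz2t, hz2⟩ := solve_z d2 q2 hq2 V2 v hv j0 (fun k => lam0 - a k n) hb
    obtain ⟨β, hβt, hβ⟩ := floquet_branches d2 q2 V2 z2 v hv hz2t hvinj
    have hne2 : ∀ᶠ k : ℕ in atTop, ∀ j, z2 k j ≠ 0 :=
      eventually_all.mpr fun j => eventually_ne_of_scaled _ _ (hv j) (hz2t j)
    have hlim : ∀ m l, ¬ (m = n ∧ l = cellZero d2 q2 hq2) →
        ev d1 q1 m u + ev d2 q2 l v ≠ 0 := by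
      intro m l hml h0
      apply hml
      apply hgen m n l
      rw [hev] at h0
      linear_combination h0
    have hsep : ∀ᶠ k in atTop, ∀ m l, ¬ (m = n ∧ l = cellZero d2 q2 hq2) →
        a2 k m + β k l ≠ lam0 + C ∧ a k m + β k l ≠ lam0 := by
      refine eventually_all.mpr fun m => eventually_all.mpr fun l => ?_
      by_cases hml : m = n ∧ l = cellZero d2 q2 hq2
      · exact Eventually.of_forall fun k hh => absurd hml hh
      · filter_upwards [eventually_sum_ne (fun k => a2 k m) (fun k => β k l) _ _ (lam0 + C)
          (hlim m l hml) (hat2 m) (hβt l), eventually_sum_ne (fun k => a k m) (fun k => β k l) _ _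
          lam0 (hlim m l hml) (hat m) (hβt l)] with k h1 h2 _
        exact ⟨h1, h2⟩
    filter_upwards [ha, ha2, hne, hz2, hβ, hne2, hsep] with k hk hk2 hkn hkz hkβ hkn2 hks
    have hroot : floquetDet d1 q1 V1 (fun j => z j + k * u j) (a k n) = 0 := by
      rw [hk.2]
      exact Finset.prod_eq_zero (Finset.mem_univ n) (sub_self _)
    obtain ⟨a', b', hab, ha', hb'⟩ := hF _ _ hkn hkn2 (a k n) (lam0 - a k n) (by ring) hroot hkz
    rw [hk2.2, Finset.prod_eq_zero_iff] at ha'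
    rw [hkβ.2, Finset.prod_eq_zero_iff] at hb' hkz
    obtain ⟨m, -, hm⟩ := ha'
    obtain ⟨l, -, hl⟩ := hb'
    obtain ⟨l2, -, hl2⟩ := hkz
    have h1 : m = n ∧ l = cellZero d2 q2 hq2 := by
      by_contra hcon
      exact (hks m l hcon).1 (by linear_combination hm + hl + hab)
    have h2 : n = n ∧ l2 = cellZero d2 q2 hq2 := by
      by_contra hcon
      exact (hks n l2 hcon).2 (by linear_combination hl2)
    rw [h1.1] at hm
    rw [h1.2] at hl
    rw [h2.2] at hl2
    linear_combination hm + hl + hab - hl2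
  filter_upwards [ha, ha2, eventually_all.mpr key] with k hk hk2 hkey
  rw [hk.2, hk2.2]
  refine Finset.prod_congr rfl fun n _ => ?_
  rw [hkey n]
  ring

lemma two_blocks
    (d1 d2 : ℕ) (hd1 : 2 ≤ d1) (hd2 : 1 ≤ d2)
    (q : Fin (d1 + d2) → ℕ) (hq : ∀ j, 0 < q j)
    (hco : ∀ i j : Fin (d1 + d2), i ≠ j → Nat.Coprime (q i) (q j))
    (V Y : (Fin (d1 + d2) → ℤ) → ℝ)
    (V1 Y1 : (Fin d1 → ℤ) → ℝ) (V2 Y2 : (Fin d2 → ℤ) → ℝ)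
    (hVsep : ∀ n : Fin (d1 + d2) → ℤ,
      V n = V1 (fun i => n (Fin.castAdd d2 i)) + V2 (fun i => n (Fin.natAdd d1 i)))
    (hYsep : ∀ n : Fin (d1 + d2) → ℤ,
      Y n = Y1 (fun i => n (Fin.castAdd d2 i)) + Y2 (fun i => n (Fin.natAdd d1 i)))
    (hFermi : FermiIsospectral (d1 + d2) q V Y) :
    (∃ C : ℝ, FloquetIsospectral d1 (fun i => q (Fin.castAdd d2 i))
        (fun m => V1 m + C) Y1) ∧
    (∃ C : ℝ, FloquetIsospectral d2 (fun i => q (Fin.natAdd d1 i))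
        (fun m => V2 m + C) Y2) := by
  obtain ⟨lam0, hset⟩ := hFermi
  set q1 : Fin d1 → ℕ := fun i => q (Fin.castAdd d2 i) with hq1d
  set q2 : Fin d2 → ℕ := fun i => q (Fin.natAdd d1 i) with hq2d
  have hq1 : ∀ j, 0 < q1 j := fun j => hq _
  have hq2 : ∀ j, 0 < q2 j := fun j => hq _
  have hco1 : ∀ i j : Fin d1, i ≠ j → Nat.Coprime (q1 i) (q1 j) := fun i j hij =>
    hco _ _ (fun h => hij (Fin.castAdd_injective d1 d2 h))
  have hco12 : ∀ (i : Fin d1) (j : Fin d2), Nat.Coprime (q1 i) (q2 j) := by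
    intro i j
    refine hco _ _ (fun h => ?_)
    have := congrArg Fin.val h
    simp at this
    omega
  -- the two-block form of the Fermi hypothesis
  have hFer : ∀ z z2, (∀ j, z j ≠ 0) → (∀ j, z2 j ≠ 0) → ∀ a b, a + b = lam0 →
      floquetDet d1 q1 V1 z a = 0 → floquetDet d2 q2 V2 z2 b = 0 →
      ∃ a2 b2, a2 + b2 = lam0 ∧ floquetDet d1 q1 Y1 z a2 = 0 ∧
        floquetDet d2 q2 Y2 z2 b2 = 0 := by
    intro z z2 hz hz2 a b hab ha hb
    have hl : (fun i => (Fin.append z z2) (Fin.castAdd d2 i)) = z := by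
      funext i; simp
    have hr : (fun i => (Fin.append z z2) (Fin.natAdd d1 i)) = z2 := by
      funext i; simp
    have hV0 : floquetDet (d1 + d2) q V (Fin.append z z2) lam0 = 0 := by
      rw [floquetDet_split d1 d2 q hq V V1 V2 hVsep, hl, hr]
      exact ⟨a, b, hab, ha, hb⟩
    have hnz : ∀ j, Fin.append z z2 j ≠ 0 := by
      intro j
      refine Fin.addCases (fun i => ?_) (fun i => ?_) j
      · simpa using hz i
      · simpa using hz2 i
    have hY0 : floquetDet (d1 + d2) q Y (Fin.append z z2) lam0 = 0 :=
      ((Set.ext_iff.mp hset (Fin.append z z2)).mp ⟨hnz, hV0⟩).2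
    rw [floquetDet_split d1 d2 q hq Y Y1 Y2 hYsep, hl, hr] at hY0
    exact hY0
  let C : ℝ := potentialAvg d1 q1 Y1 - potentialAvg d1 q1 V1
  have hincl : ∀ z2 : Fin d2 → ℂ, (∀ j, z2 j ≠ 0) → ∀ b, floquetDet d2 q2 V2 z2 b = 0 →
      floquetDet d2 q2 Y2 z2 (b - (C : ℂ)) = 0 := by
    intro z2 hz2 b hb
    have hmem := step1 d1 hd1 q1 hq1 hco1 V1 Y1 (lam0 - b)
      ((fun b2 => lam0 - b2) '' {b2 | floquetDet d2 q2 Y2 z2 b2 = 0})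
      ((floquetDet_zero_finite d2 q2 Y2 z2).image _) (by
        intro z hz ha
        obtain ⟨a2, b2, hab, h1, h2⟩ := hFer z z2 hz hz2 (lam0 - b) b (by ring) ha hb
        refine ⟨a2, ⟨b2, h2, ?_⟩, h1⟩
        simp only []
        linear_combination -hab)
    obtain ⟨b2, hb2, hbe⟩ := hmem
    have hbb : b - (C : ℂ) = b2 := by
      simp only [C]
      push_cast
      linear_combination hbe
    rw [hbb]
    exact hb2
  have h2 := floquet_of_incl d2 q2 hq2 V2 Y2 (C : ℂ) hincl
  refine ⟨⟨C, ?_⟩, ⟨-C, ?_⟩⟩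
  · intro z hz lam
    rw [floquetDet_add_const d1 q1 hq1]
    refine step3 d1 d2 q1 q2 hq1 hq2 ⟨0, by omega⟩ ⟨0, by omega⟩ (hco12 _) V1 Y1 V2 (C : ℂ) lam0
      ?_ z hz lam
    intro z z2 hz hz2 a b hab ha hb
    obtain ⟨a2, b2, hab2, h3, h4⟩ := hFer z z2 hz hz2 a b hab ha hb
    refine ⟨a2, b2, hab2, h3, ?_⟩
    rw [h2 z2 hz2, add_sub_cancel_right]
    exact h4
  · intro z hz lam
    rw [floquetDet_add_const d2 q2 hq2, h2 z hz]
    congr 1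
    push_cast
    ring

end Helpers

/-- Theorem 6.1: if `V = V₁ ⊕ V₂` and `Y = Y₁ ⊕ Y₂` are `(d₁,d₂)`
separable and Fermi isospectral, then up to constants `V_j` and `Y_j` are Floquet
isospectral, `j = 1, 2`. -/
theorem fermi_isospectral_two_blocks_floquet_isospectral
    (d1 d2 : ℕ) (hd1 : 2 ≤ d1) (hd2 : 1 ≤ d2)
    (q : Fin (d1 + d2) → ℕ) (hq : ∀ j, 0 < q j)
    (hco : ∀ i j : Fin (d1 + d2), i ≠ j → Nat.Coprime (q i) (q j))
    (V Y : (Fin (d1 + d2) → ℤ) → ℝ)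
    (hVper : IsPeriodicPotential (d1 + d2) q V) (hYper : IsPeriodicPotential (d1 + d2) q Y)
    (V1 Y1 : (Fin d1 → ℤ) → ℝ) (V2 Y2 : (Fin d2 → ℤ) → ℝ)
    (hVsep : ∀ n : Fin (d1 + d2) → ℤ,
      V n = V1 (fun i => n (Fin.castAdd d2 i)) + V2 (fun i => n (Fin.natAdd d1 i)))
    (hYsep : ∀ n : Fin (d1 + d2) → ℤ,
      Y n = Y1 (fun i => n (Fin.castAdd d2 i)) + Y2 (fun i => n (Fin.natAdd d1 i)))
    (hFermi : FermiIsospectral (d1 + d2) q V Y) :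
    (∃ C : ℝ, FloquetIsospectral d1 (fun i => q (Fin.castAdd d2 i))
        (fun m => V1 m + C) Y1) ∧
    (∃ C : ℝ, FloquetIsospectral d2 (fun i => q (Fin.natAdd d1 i))
        (fun m => V2 m + C) Y2) := by
  exact two_blocks d1 d2 hd1 hd2 q hq hco V Y V1 Y1 V2 Y2 hVsep hYsep hFermi

end
end

section
/- Let m ≥ 2 and let q_1, …, q_m be pairwise coprime positive integers. Then there exists z⁰ = (z⁰_1, …, z⁰_m) ∈ ℂ^m with Σ_{j=1}^m z⁰_j = 0 such that for every (n_1,…,n_m) with 0 ≤ n_j ≤ q_j − 1 for all j and (n_1,…,n_m) ≠ (0,…,0), one has Σ_{j=1}^m e^{2πi n_j/q_j} z⁰_j ≠ 0. -/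
open scoped BigOperators
open Complex

/-- equations (4.12)–(4.13): for pairwise coprime `q₁,…,q_m`, there is a
vector `z⁰ ∈ ℂ^m` with `Σ z⁰_j = 0` such that `Σ_j e^{2πi n_j/q_j} z⁰_j ≠ 0` for every
`(n₁,…,n_m) ≠ (0,…,0)` with `0 ≤ n_j ≤ q_j − 1`. -/
theorem exists_vector_sum_zero_roots_of_unity_nonvanishing
    (m : ℕ) (hm : 2 ≤ m)
    (q : Fin m → ℕ) (hq : ∀ j, 0 < q j)
    (hco : ∀ i j : Fin m, i ≠ j → Nat.Coprime (q i) (q j)) :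
    ∃ z : Fin m → ℂ, (∑ j, z j) = 0 ∧
      ∀ n : (j : Fin m) → Fin (q j), (∃ j, (n j : ℕ) ≠ 0) →
        (∑ j, Complex.exp (2 * Real.pi * Complex.I * ((n j : ℕ) : ℂ) / (q j : ℂ)) * z j)
          ≠ 0 := by
  classical
  set w : ((j : Fin m) → Fin (q j)) → Fin m → ℂ := fun n j =>
    Complex.exp (2 * Real.pi * Complex.I * ((n j : ℕ) : ℂ) / (q j : ℂ)) with hw
  have hwpow : ∀ n j, w n j = Complex.exp (2 * Real.pi * Complex.I / (q j : ℂ)) ^ (n j : ℕ) := by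
    intro n j
    rw [← Complex.exp_nat_mul]
    simp only [hw]
    congr 1
    ring
  have hprim : ∀ j, IsPrimitiveRoot (Complex.exp (2 * Real.pi * Complex.I / (q j : ℂ))) (q j) :=
    fun j => Complex.isPrimitiveRoot_exp (q j) (hq j).ne'
  have hwq : ∀ n j, w n j ^ q j = 1 := by
    intro n j
    rw [hwpow, pow_right_comm, (hprim j).pow_eq_one, one_pow]
  let o : Fin m := ⟨0, by omega⟩
  have hne : ∀ n : (j : Fin m) → Fin (q j), (∃ j, (n j : ℕ) ≠ 0) → ∃ j, w n j ≠ w n o := by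
    rintro n ⟨j, hj⟩
    by_contra! hall
    haveI : Nontrivial (Fin m) := Fin.nontrivial_iff_two_le.mpr hm
    obtain ⟨i, hi⟩ := exists_ne j
    have h1 : w n j ^ q i = 1 := by rw [hall j, ← hall i, hwq]
    have h2 : w n j ^ (Nat.gcd (q i) (q j)) = 1 := pow_gcd_eq_one.mpr ⟨h1, hwq n j⟩
    rw [hco i j hi, pow_one, hwpow] at h2
    have h3 := Nat.le_of_dvd (Nat.pos_of_ne_zero hj) ((hprim j).dvd_of_pow_eq_one _ h2)
    have := (n j).isLt
    omega
  let P : ((j : Fin m) → Fin (q j)) → Polynomial ℂ := fun n =>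
    ∑ j : Fin m, Polynomial.C (w n j - w n o) * Polynomial.X ^ (j : ℕ)
  have hP : ∀ n : (j : Fin m) → Fin (q j), (∃ j, (n j : ℕ) ≠ 0) → P n ≠ 0 := by
    intro n hn h0
    obtain ⟨j, hj⟩ := hne n hn
    have h1 : (P n).coeff (j : ℕ) = w n j - w n o := by
      simp only [P, Polynomial.finset_sum_coeff, Polynomial.coeff_C_mul_X_pow]
      simp [Fin.val_inj]
    rw [h0, Polynomial.coeff_zero] at h1
    exact hj (sub_eq_zero.mp h1.symm)
  let Q : Polynomial ℂ := ∏ n ∈ Finset.univ.filter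
    (fun n : (j : Fin m) → Fin (q j) => ∃ j, (n j : ℕ) ≠ 0), P n
  have hQ : Q ≠ 0 := Finset.prod_ne_zero_iff.mpr fun n hn => hP n (Finset.mem_filter.mp hn).2
  obtain ⟨t, ht⟩ : ∃ t, Q.eval t ≠ 0 := by
    by_contra! h
    exact hQ (Polynomial.funext fun t => by simpa using h t)
  refine ⟨fun j => t ^ (j : ℕ) - if j = o then ∑ k : Fin m, t ^ (k : ℕ) else 0, ?_, ?_⟩
  · simp [Finset.sum_sub_distrib]
  · intro n hn h0
    apply ht
    rw [Polynomial.eval_prod]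
    refine Finset.prod_eq_zero (Finset.mem_filter.mpr ⟨Finset.mem_univ n, hn⟩) ?_
    change ∑ j, w n j * _ = 0 at h0
    rw [← h0]
    simp only [P, Polynomial.eval_finset_sum, Polynomial.eval_mul, Polynomial.eval_C,
      Polynomial.eval_pow, Polynomial.eval_X, mul_sub, sub_mul, Finset.sum_sub_distrib]
    simp [Finset.mul_sum]
end

section
/- Let q_1, q_2, q_3 be pairwise coprime positive integers, and write ρ^j_m = e^{2πi m/q_j}. Fix l_1 ∈ {1,…,q_1−1}, l_2 ∈ {1,…,q_2−1}, and l_3 ∈ {0,…,q_3−1}. Then the linear system z_1 + z_2 + z_3 = 0, ρ^1_{l_1} z_1 + ρ^2_{l_2} z_2 + ρ^3_{l_3} z_3 = 0 has a nonzero solution (z⁰_1, z⁰_2, z⁰_3) ∈ ℂ³, and every nonzero solution satisfies: for all l_1′ ∈ {0,…,q_1−1}, l_2′ ∈ {0,…,q_2−1}, l_3′ ∈ {0,…,q_3−1} with (l_1′,l_2′,l_3′) ≠ (0,0,0) and (l_1′,l_2′,l_3′) ≠ (l_1,l_2,l_3), one has ρ^1_{l_1′} z⁰_1 + ρ^2_{l_2′}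 z⁰_2 + ρ^3_{l_3′} z⁰_3 ≠ 0. -/
open scoped BigOperators
open Complex

theorem aux_cop {q r : ℕ} (h : Nat.Coprime q r) {x : ℂ} (h1 : x ^ q = 1) (h2 : x ^ r = 1) :
    x = 1 := by
  have h3 := pow_gcd_eq_one.2 ⟨h1, h2⟩
  rwa [Nat.Coprime.gcd_eq_one h, pow_one] at h3

theorem aux_cop_ratio {q r : ℕ} (h : Nat.Coprime q r) {a a' c c' : ℂ}
    (ha : a ^ q = 1) (ha' : a' ^ q = 1) (hc : c ^ r = 1) (hc' : c' ^ r = 1)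
    (a0 : a ≠ 0) (c0 : c ≠ 0) (e : a' * c = a * c') : a' = a ∧ c' = c := by
  have e1 : a' / a = c' / c := by
    rw [div_eq_div_iff a0 c0, e, mul_comm]
  have h1 : (a' / a) ^ q = 1 := by rw [div_pow, ha, ha', div_one]
  have h2 : (a' / a) ^ r = 1 := by rw [e1, div_pow, hc, hc', div_one]
  have h3 := aux_cop h h1 h2
  have h4 := e1 ▸ h3
  exact ⟨(div_eq_one_iff_eq a0).1 h3, (div_eq_one_iff_eq c0).1 h4⟩

theorem aux_exp (q l : ℕ) (hq : 0 < q) (hl : l < q) :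
    ∃ a : ℂ, Complex.exp (2 * Real.pi * Complex.I * (l : ℂ) / (q : ℂ)) = a ∧
      a = Complex.exp (2 * Real.pi * Complex.I / (q : ℂ)) ^ l ∧
      a ^ q = 1 ∧ a ≠ 0 ∧ (starRingEnd ℂ) a = a⁻¹ := by
  have hp := Complex.isPrimitiveRoot_exp q hq.ne'
  have h1 : Complex.exp (2 * Real.pi * Complex.I * (l : ℂ) / (q : ℂ)) =
      Complex.exp (2 * Real.pi * Complex.I / (q : ℂ)) ^ l := by
    rw [← Complex.exp_nat_mul]
    congr 1
    ring
  refine ⟨_, rfl, h1, ?_, Complex.exp_ne_zero _, ?_⟩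
  · rw [h1, ← pow_mul, mul_comm l q, pow_mul, hp.pow_eq_one, one_pow]
  · rw [← Complex.exp_conj, ← Complex.exp_neg]
    congr 1
    have h2 : (starRingEnd ℂ) 2 = 2 := Complex.conj_ofNat 2
    simp only [map_div₀, map_mul, Complex.conj_ofReal, Complex.conj_I, map_natCast, h2]
    ring

theorem aux_inj {q l m : ℕ} (hq : 0 < q) (hl : l < q) (hm : m < q)
    (h : Complex.exp (2 * Real.pi * Complex.I / (q : ℂ)) ^ l =
      Complex.exp (2 * Real.pi * Complex.I / (q : ℂ)) ^ m) : l = m :=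
  (Complex.isPrimitiveRoot_exp q hq.ne').pow_inj hl hm h

theorem aux_tri {a b c a' b' c' : ℂ} (a0 : a ≠ 0) (b0 : b ≠ 0) (c0 : c ≠ 0)
    (a0' : a' ≠ 0) (b0' : b' ≠ 0) (c0' : c' ≠ 0)
    (ha : (starRingEnd ℂ) a = a⁻¹) (hb : (starRingEnd ℂ) b = b⁻¹)
    (hc : (starRingEnd ℂ) c = c⁻¹) (ha' : (starRingEnd ℂ) a' = a'⁻¹)
    (hb' : (starRingEnd ℂ) b' = b'⁻¹) (hc' : (starRingEnd ℂ) c' = c'⁻¹)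
    (hab : a ≠ b) (hac : a ≠ c) (hbc : b ≠ c)
    (D : (a - c) * (b' - c') = (b - c) * (a' - c')) :
    (a' = c' ∧ b' = c') ∨ (a' * c = a * c' ∧ b' * c = b * c') := by
  have hac' := sub_ne_zero.2 hac
  have hbc' := sub_ne_zero.2 hbc
  have hab' := sub_ne_zero.2 hab
  have D2 := congrArg (starRingEnd ℂ) D
  simp only [map_mul, map_sub, ha, hb, hc, ha', hb', hc'] at D2
  have D3 : (a - c) * (b' - c') * (b * a') = (b - c) * (a' - c') * (a * b') := by
    field_simp at D2
    linear_combination D2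
  by_cases hb1 : b' - c' = 0
  · left
    rw [hb1, mul_zero] at D
    have := (mul_eq_zero.1 D.symm).resolve_left hbc'
    exact ⟨sub_eq_zero.1 this, sub_eq_zero.1 hb1⟩
  · right
    have D4 : b * a' = a * b' := by
      rw [← D] at D3
      exact mul_left_cancel₀ (mul_ne_zero hac' hb1) D3
    have D5 : (a - b) * (a' * c - a * c') = 0 := by
      linear_combination a * D - (c - a) * D4
    have D6 := sub_eq_zero.1 ((mul_eq_zero.1 D5).resolve_left hab')
    refine ⟨D6, ?_⟩
    apply mul_left_cancel₀ a0
    linear_combination b * D6 - c * D4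

/-- equations (4.9)–(4.11): for pairwise coprime `q₁, q₂, q₃` and
`l₁ ∈ {1,…,q₁−1}`, `l₂ ∈ {1,…,q₂−1}`, `l₃ ∈ {0,…,q₃−1}`, the linear system
`z₁ + z₂ + z₃ = 0`, `ρ¹_{l₁} z₁ + ρ²_{l₂} z₂ + ρ³_{l₃} z₃ = 0` has a nonzero solution, and
every nonzero solution satisfies `ρ¹_{l₁'} z₁ + ρ²_{l₂'} z₂ + ρ³_{l₃'} z₃ ≠ 0` for all
`(l₁',l₂',l₃') ∉ {(0,0,0), (l₁,l₂,l₃)}` in the admissible range. -/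
theorem roots_of_unity_linear_system
    (q1 q2 q3 : ℕ) (hq1 : 0 < q1) (hq2 : 0 < q2) (hq3 : 0 < q3)
    (h12 : Nat.Coprime q1 q2) (h13 : Nat.Coprime q1 q3) (h23 : Nat.Coprime q2 q3)
    (l1 l2 l3 : ℕ) (hl1 : 0 < l1) (hl1q : l1 < q1) (hl2 : 0 < l2) (hl2q : l2 < q2)
    (hl3 : l3 < q3) :
    (∃ z1 z2 z3 : ℂ, ¬(z1 = 0 ∧ z2 = 0 ∧ z3 = 0) ∧
      z1 + z2 + z3 = 0 ∧
      Complex.exp (2 * Real.pi * Complex.I * (l1 : ℂ) / (q1 : ℂ)) * z1 +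
        Complex.exp (2 * Real.pi * Complex.I * (l2 : ℂ) / (q2 : ℂ)) * z2 +
        Complex.exp (2 * Real.pi * Complex.I * (l3 : ℂ) / (q3 : ℂ)) * z3 = 0) ∧
    (∀ z1 z2 z3 : ℂ, ¬(z1 = 0 ∧ z2 = 0 ∧ z3 = 0) →
      z1 + z2 + z3 = 0 →
      Complex.exp (2 * Real.pi * Complex.I * (l1 : ℂ) / (q1 : ℂ)) * z1 +
        Complex.exp (2 * Real.pi * Complex.I * (l2 : ℂ) / (q2 : ℂ)) * z2 +
        Complex.exp (2 * Real.pi * Complex.I * (l3 : ℂ) / (q3 : ℂ)) * z3 = 0 →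
      ∀ l1' l2' l3' : ℕ, l1' < q1 → l2' < q2 → l3' < q3 →
        ¬(l1' = 0 ∧ l2' = 0 ∧ l3' = 0) → ¬(l1' = l1 ∧ l2' = l2 ∧ l3' = l3) →
        Complex.exp (2 * Real.pi * Complex.I * (l1' : ℂ) / (q1 : ℂ)) * z1 +
          Complex.exp (2 * Real.pi * Complex.I * (l2' : ℂ) / (q2 : ℂ)) * z2 +
          Complex.exp (2 * Real.pi * Complex.I * (l3' : ℂ) / (q3 : ℂ)) * z3 ≠ 0) := by
  obtain ⟨a, ea, pa, aq, a0, ca⟩ := aux_exp q1 l1 hq1 hl1q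
  obtain ⟨b, eb, pb, bq, b0, cb⟩ := aux_exp q2 l2 hq2 hl2q
  obtain ⟨c, ec, pc, cq, c0, cc⟩ := aux_exp q3 l3 hq3 hl3
  rw [ea, eb, ec]
  have a1 : a ≠ 1 := fun h => by
    have := aux_inj hq1 hl1q hq1 (by rw [← pa, h, pow_zero])
    omega
  have b1 : b ≠ 1 := fun h => by
    have := aux_inj hq2 hl2q hq2 (by rw [← pb, h, pow_zero])
    omega
  have hab : a ≠ b := fun h => a1 (aux_cop h12 aq (h ▸ bq))
  have hac : a ≠ c := fun h => a1 (aux_cop h13 aq (h ▸ cq))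
  have hbc : b ≠ c := fun h => b1 (aux_cop h23 bq (h ▸ cq))
  refine ⟨⟨b - c, c - a, a - b, fun h => hbc (sub_eq_zero.1 h.1), by ring, by ring⟩, ?_⟩
  intro z1 z2 z3 hz s1 s2 m1 m2 m3 hm1 hm2 hm3 n0 n1
  obtain ⟨a', ea', pa', aq', a0', ca'⟩ := aux_exp q1 m1 hq1 hm1
  obtain ⟨b', eb', pb', bq', b0', cb'⟩ := aux_exp q2 m2 hq2 hm2
  obtain ⟨c', ec', pc', cq', c0', cc'⟩ := aux_exp q3 m3 hq3 hm3
  rw [ea', eb', ec']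
  intro s3
  have D : (a - c) * (b' - c') = (b - c) * (a' - c') := by
    have k1 : ((a - c) * (b' - c') - (b - c) * (a' - c')) * z1 = 0 := by
      linear_combination (b' - c') * (s2 - c * s1) - (b - c) * (s3 - c' * s1)
    have k2 : ((a - c) * (b' - c') - (b - c) * (a' - c')) * z2 = 0 := by
      linear_combination (a - c) * (s3 - c' * s1) - (a' - c') * (s2 - c * s1)
    by_contra hD
    have hD' := sub_ne_zero.2 hD
    have z10 := (mul_eq_zero.1 k1).resolve_left hD'
    have z20 := (mul_eq_zero.1 k2).resolve_left hD'
    refine hz ⟨z10, z20, ?_⟩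
    rw [z10, z20] at s1
    simpa using s1
  rcases aux_tri a0 b0 c0 a0' b0' c0' ca cb cc ca' cb' cc' hab hac hbc D with ⟨e1, e2⟩ | ⟨e1, e2⟩
  · have x1 : a' = 1 := aux_cop h13 aq' (e1 ▸ cq')
    have x2 : b' = 1 := aux_cop h23 bq' (e2 ▸ cq')
    have x3 : c' = 1 := e1 ▸ x1
    exact n0 ⟨aux_inj hq1 hm1 hq1 (by rw [← pa', x1, pow_zero]),
      aux_inj hq2 hm2 hq2 (by rw [← pb', x2, pow_zero]),
      aux_inj hq3 hm3 hq3 (by rw [← pc', x3, pow_zero])⟩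
  · obtain ⟨x1, x3⟩ := aux_cop_ratio h13 aq aq' cq cq' a0 c0 e1
    obtain ⟨x2, _⟩ := aux_cop_ratio h23 bq bq' cq cq' b0 c0 e2
    exact n1 ⟨aux_inj hq1 hm1 hl1q (by rw [← pa', ← pa, x1]),
      aux_inj hq2 hm2 hl2q (by rw [← pb', ← pb, x2]),
      aux_inj hq3 hm3 hl3 (by rw [← pc', ← pc, x3])⟩
end
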